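/- For a permutation σ of length n avoiding 4213 and 2143, let left(σ) = min{j : there exists k such that (j,k) is a G-gridding of σ} (the minimal number of left points over all G-griddings of σ). Then the average of left(σ) over all permutations of length n avoiding 4213 and 2143 converges to 175/132 as n → ∞, and its variance converges to 74795/17424 (so the limiting standard deviation is √74795/132). -/

import Mathlib

open Filter Topology PowerSeries

/-- `σ` contains the pattern `π`. -/
def PatternContains {n k : ℕ} (σ : Equiv.Perm (Fin n)) (π : Fin k → Fin k) : Prop :=
  ∃ f : Fin k → Fin n, StrictMono f ∧ ∀ a b : Fin k, π a < π b ↔ σ (f a) < σ (f b)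

/-- `σ` avoids the pattern `π`. -/
def PatternAvoids {n k : ℕ} (σ : Equiv.Perm (Fin n)) (π : Fin k → Fin k) : Prop :=
  ¬ PatternContains σ π

/-- The pattern 4213 (zero-indexed values). -/
def p4213 : Fin 4 → Fin 4 := ![3, 1, 0, 2]

/-- The pattern 2413 (zero-indexed values). -/
def p2413 : Fin 4 → Fin 4 := ![1, 3, 0, 2]

/-- The pattern 2143 (zero-indexed values). -/
def p2143 : Fin 4 → Fin 4 := ![1, 0, 3, 2]

/-- The pattern 213 (zero-indexed values). -/
def p213 : Fin 3 → Fin 3 := ![1, 0, 2]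

/-- `σ` avoids 4213, 2413 and 2143. -/
def AvoidsH {n : ℕ} (σ : Equiv.Perm (Fin n)) : Prop :=
  PatternAvoids σ p4213 ∧ PatternAvoids σ p2413 ∧ PatternAvoids σ p2143

/-- `σ` avoids 4213 and 2143. -/
def AvoidsD {n : ℕ} (σ : Equiv.Perm (Fin n)) : Prop :=
  PatternAvoids σ p4213 ∧ PatternAvoids σ p2143

/-- An H-gridding of `σ`: a value cutoff `k ∈ {0,…,n}` such that the subsequence of
entries with (1-based) values `> k` is increasing and the subsequence of entries with
values `≤ k` avoids 213. -/
def HGridding {n : ℕ} (σ : Equiv.Perm (Fin n)) (k : ℕ) : Prop :=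
  k ≤ n ∧
  (∀ i j : Fin n, i < j → k < (σ i : ℕ) + 1 → k < (σ j : ℕ) + 1 → σ i < σ j) ∧
  ¬ ∃ f : Fin 3 → Fin n, StrictMono f ∧ (∀ a, (σ (f a) : ℕ) + 1 ≤ k) ∧
      (∀ a b : Fin 3, p213 a < p213 b ↔ σ (f a) < σ (f b))

/-- A G-gridding of `σ`: a pair `(j, k)` with `0 ≤ j, k ≤ n` such that (i) the first `j`
entries have values `≤ k` and are increasing, (ii) the subsequence of entries at
(1-based) positions `> j` with values `> k` is increasing, and (iii) the subsequence of
entries at positions `> j` with values `≤ k` avoids 213. -/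
def GGridding {n : ℕ} (σ : Equiv.Perm (Fin n)) (j k : ℕ) : Prop :=
  j ≤ n ∧ k ≤ n ∧
  (∀ i : Fin n, (i : ℕ) < j → (σ i : ℕ) + 1 ≤ k) ∧
  (∀ i₁ i₂ : Fin n, i₁ < i₂ → (i₂ : ℕ) < j → σ i₁ < σ i₂) ∧
  (∀ i₁ i₂ : Fin n, i₁ < i₂ → j ≤ (i₁ : ℕ) → k < (σ i₁ : ℕ) + 1 → k < (σ i₂ : ℕ) + 1 →
      σ i₁ < σ i₂) ∧
  ¬ ∃ f : Fin 3 → Fin n, StrictMono f ∧ (∀ a, j ≤ ((f a) : ℕ) ∧ (σ (f a) : ℕ) + 1 ≤ k) ∧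
      (∀ a b : Fin 3, p213 a < p213 b ↔ σ (f a) < σ (f b))

/-- The number of permutations of length `n` avoiding 4213, 2413 and 2143. -/
noncomputable def hCount (n : ℕ) : ℕ :=
  Nat.card {σ : Equiv.Perm (Fin n) // AvoidsH σ}

/-- The number of permutations of length `n` avoiding 4213 and 2143. -/
noncomputable def dCount (n : ℕ) : ℕ :=
  Nat.card {σ : Equiv.Perm (Fin n) // AvoidsD σ}

/-- The minimal number of top points over all H-griddings of `σ`. -/
noncomputable def topPts {n : ℕ} (σ : Equiv.Perm (Fin n)) : ℕ :=
  n - sSup {k | HGridding σ k}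

/-- The minimal number of left points over all G-griddings of `σ`. -/
noncomputable def leftPts {n : ℕ} (σ : Equiv.Perm (Fin n)) : ℕ :=
  sInf {j | ∃ k, GGridding σ j k}

/-!
Build the permutations avoiding 4213 and 2143 by prepending entries. For such a permutation,
`leftPts` is the least `j` for which no occurrence of 2413 starts at a position `≥ j`, so it is
decided while prepending: the entries come before the last first entry of a 2413 or after it. The
values at which an entry can be prepended are described by a label with finitely many integers, and
the labels obey a succession rule. The generating functions of the descendants of all labels can be
written down explicitly in terms of the algebraic series `q = 1 + z * q ^ 2 / (1 - z)`. At weight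
`1 + ε` of the left points, every coefficient of the expansion in `ε` inherits from `q` a
square-root singularity at `z = 1 / 5`, and no other singularity is as small. Hence the
binomial moments all grow like `n ^ (-3/2) * 5 ^ n`, with constants that are computable rational
multiples of one another.
-/

/-! ### Prepending an entry to a permutation -/

/-- The permutation obtained from `σ` by adding a first entry of value `v`. -/
def prepend {n : ℕ} (v : Fin (n + 1)) (σ : Equiv.Perm (Fin n)) : Equiv.Perm (Fin (n + 1)) :=
  ((finSuccEquiv' 0).trans (Equiv.optionCongr σ)).trans (finSuccEquiv' v).symm

@[simp] lemma prepend_zero {n : ℕ} (v : Fin (n + 1)) (σ : Equiv.Perm (Fin n)) :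
    prepend v σ 0 = v := by
  simp [prepend]

@[simp] lemma prepend_succ {n : ℕ} (v : Fin (n + 1)) (σ : Equiv.Perm (Fin n)) (i : Fin n) :
    prepend v σ i.succ = v.succAbove (σ i) := by
  have h : finSuccEquiv' (0 : Fin (n + 1)) i.succ = some i := by simp
  simp [prepend, h]

lemma prepend_bijective (n : ℕ) :
    Function.Bijective fun p : Fin (n + 1) × Equiv.Perm (Fin n) => prepend p.1 p.2 := by
  rw [Fintype.bijective_iff_injective_and_card]
  refine ⟨?_, by simp [Fintype.card_perm, Nat.factorial_succ]⟩
  rintro ⟨v, σ⟩ ⟨v', σ'⟩ h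
  obtain rfl : v = v' := by simpa using congrArg (fun τ => τ 0) h
  obtain rfl : σ = σ' := by
    ext i
    have hi : prepend v σ i.succ = prepend v σ' i.succ := congrArg (fun τ => τ i.succ) h
    simp only [prepend_succ] at hi
    rw [Fin.succAbove_right_injective hi]
  rfl

lemma sum_perm_fin_succ {n : ℕ} {M : Type*} [AddCommMonoid M]
    (F : Equiv.Perm (Fin (n + 1)) → M) :
    ∑ τ, F τ = ∑ σ : Equiv.Perm (Fin n), ∑ v, F (prepend v σ) := by
  rw [← (prepend_bijective n).sum_comp F, Fintype.sum_prod_type_right]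

/-- The value that an entry `x` takes after a new entry of value `v` is inserted
(`Fin.succAbove` on natural numbers). -/
def bump (v x : ℕ) : ℕ := if x < v then x else x + 1

lemma val_prepend_succ {n : ℕ} (v : Fin (n + 1)) (σ : Equiv.Perm (Fin n)) (i : Fin n) :
    (prepend v σ i.succ : ℕ) = bump v (σ i) := by
  rw [prepend_succ, bump, Fin.succAbove]
  simp only [Fin.lt_def, Fin.val_castSucc]
  split_ifs <;> simp

lemma bump_lt_bump {v x y : ℕ} : bump v x < bump v y ↔ x < y := by
  unfold bump; split_ifs <;> omega

lemma bump_lt_iff {v x : ℕ} : bump v x < v ↔ x < v := by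
  unfold bump; split_ifs <;> omega

lemma lt_bump_iff {v x : ℕ} : v < bump v x ↔ v ≤ x := by
  unfold bump; split_ifs <;> omega

lemma bump_lt_iff_of_le {v g x : ℕ} (h : g ≤ v) : bump v x < g ↔ x < g := by
  unfold bump; split_ifs <;> omega

lemma le_bump_iff_of_le {v g x : ℕ} (h : g ≤ v) : g ≤ bump v x ↔ g ≤ x := by
  unfold bump; split_ifs <;> omega

lemma bump_lt_succ_iff {v g x : ℕ} (h : v ≤ g) : bump v x < g + 1 ↔ x < g := by
  unfold bump; split_ifs <;> omega

lemma succ_le_bump_iff {v g x : ℕ} (h : v ≤ g) : g + 1 ≤ bump v x ↔ g ≤ x := by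
  unfold bump; split_ifs <;> omega

/-! ### Occurrences of patterns -/

lemma lt_iff_lt_iff_strictMono_comp {k : ℕ} {α : Type*} [LinearOrder α] {π ρ : Fin k → Fin k}
    (hl : Function.LeftInverse π ρ) (hr : Function.RightInverse π ρ) {s : Fin k → α} :
    (∀ a b, π a < π b ↔ s a < s b) ↔ StrictMono (s ∘ ρ) := by
  refine ⟨fun h x y hxy => (h _ _).1 (by rwa [hl x, hl y]), fun h a b => ?_⟩
  rw [← h.lt_iff_lt, Function.comp_apply, Function.comp_apply, hr a, hr b]

lemma exists_strictMono_three {n : ℕ} {P : (Fin 3 → Fin n) → Prop} :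
    (∃ f, StrictMono f ∧ P f) ↔ ∃ a b c, a < b ∧ b < c ∧ P ![a, b, c] := by
  constructor
  · rintro ⟨f, hf, hP⟩
    have hf_eq : ![f 0, f 1, f 2] = f := by ext i; fin_cases i <;> rfl
    exact ⟨f 0, f 1, f 2, hf (by decide), hf (by decide), hf_eq ▸ hP⟩
  · rintro ⟨a, b, c, hab, hbc, hP⟩
    exact ⟨_, by simp [Fin.strictMono_iff_lt_succ, Fin.forall_fin_succ, hab, hbc], hP⟩

lemma exists_strictMono_four {n : ℕ} {P : (Fin 4 → Fin n) → Prop} :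
    (∃ f, StrictMono f ∧ P f) ↔
      ∃ a b c d, a < b ∧ b < c ∧ c < d ∧ P ![a, b, c, d] := by
  constructor
  · rintro ⟨f, hf, hP⟩
    have hf_eq : ![f 0, f 1, f 2, f 3] = f := by ext i; fin_cases i <;> rfl
    exact ⟨f 0, f 1, f 2, f 3, hf (by decide), hf (by decide), hf (by decide), hf_eq ▸ hP⟩
  · rintro ⟨a, b, c, d, hab, hbc, hcd, hP⟩
    exact ⟨_, by simp [Fin.strictMono_iff_lt_succ, Fin.forall_fin_succ, hab, hbc, hcd], hP⟩

lemma patternContains_p4213_iff {n : ℕ} {σ : Equiv.Perm (Fin n)} :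
    PatternContains σ p4213 ↔ ∃ a b c d : Fin n, a < b ∧ b < c ∧ c < d ∧
      (σ c : ℕ) < σ b ∧ (σ b : ℕ) < σ d ∧ (σ d : ℕ) < σ a := by
  simp_rw [PatternContains, exists_strictMono_four,
    lt_iff_lt_iff_strictMono_comp (π := p4213) (ρ := ![2, 1, 3, 0]) (by decide) (by decide)]
  simp [Fin.strictMono_iff_lt_succ, Fin.forall_fin_succ]

lemma patternContains_p2143_iff {n : ℕ} {σ : Equiv.Perm (Fin n)} :
    PatternContains σ p2143 ↔ ∃ a b c d : Fin n, a < b ∧ b < c ∧ c < d ∧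
      (σ b : ℕ) < σ a ∧ (σ a : ℕ) < σ d ∧ (σ d : ℕ) < σ c := by
  simp_rw [PatternContains, exists_strictMono_four,
    lt_iff_lt_iff_strictMono_comp (π := p2143) (ρ := ![1, 0, 3, 2]) (by decide) (by decide)]
  simp [Fin.strictMono_iff_lt_succ, Fin.forall_fin_succ]

lemma exists_p213_iff {n : ℕ} {σ : Equiv.Perm (Fin n)} {Q : Fin n → Prop} :
    (∃ f : Fin 3 → Fin n, StrictMono f ∧ (∀ a, Q (f a)) ∧
      ∀ a b : Fin 3, p213 a < p213 b ↔ σ (f a) < σ (f b)) ↔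
    ∃ a b c : Fin n, a < b ∧ b < c ∧ (Q a ∧ Q b ∧ Q c) ∧
      (σ b : ℕ) < σ a ∧ (σ a : ℕ) < σ c := by
  simp_rw [exists_strictMono_three,
    lt_iff_lt_iff_strictMono_comp (π := p213) (ρ := ![1, 0, 2]) (by decide) (by decide)]
  simp [Fin.strictMono_iff_lt_succ, Fin.forall_fin_succ]

/-! ### Patterns and value gaps -/

section Gaps

variable {n : ℕ} (σ : Equiv.Perm (Fin n))

/-- Some 213 of `σ` lies below the gap `g`. Here and below, the gap `g` is the place in the value
order between the entries of value less than `g` and the others. -/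
def Contains213Below (g : ℕ) : Prop :=
  ∃ i j k : Fin n, i < j ∧ j < k ∧ (σ j : ℕ) < σ i ∧ (σ i : ℕ) < σ k ∧ (σ k : ℕ) < g

/-- The gap `g` separates the 1 from the 32 in some 132. -/
def Splits132 (g : ℕ) : Prop :=
  ∃ i j k : Fin n, i < j ∧ j < k ∧ (σ i : ℕ) < g ∧ g ≤ σ k ∧ (σ k : ℕ) < σ j

/-- The gap `g` separates the 1 from the 32 in some 312. -/
def Splits312 (g : ℕ) : Prop :=
  ∃ i j k : Fin n, i < j ∧ j < k ∧ (σ j : ℕ) < g ∧ g ≤ σ k ∧ (σ k : ℕ) < σ i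

/-- Some 21 lies above the gap `g`. -/
def Contains21Above (g : ℕ) : Prop :=
  ∃ i j : Fin n, i < j ∧ g ≤ σ j ∧ (σ j : ℕ) < σ i

/-- Some 12 below the gap `h` is split by the gap `g`. -/
def Splits12Below (g h : ℕ) : Prop :=
  ∃ i j : Fin n, i < j ∧ (σ i : ℕ) < g ∧ g ≤ σ j ∧ (σ j : ℕ) < h

/-- `σ` contains 2413 with its first entry at position at least `m`. -/
def Contains2413From (m : ℕ) : Prop :=
  ∃ a b c d : Fin n, a < b ∧ b < c ∧ c < d ∧ m ≤ a ∧
    (σ c : ℕ) < σ a ∧ (σ a : ℕ) < σ d ∧ (σ d : ℕ) < σ b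

/-- Adding a first entry of value `g` creates neither a 4213 nor a 2143; in the language of
generating trees, `g` is an active site of `σ`. -/
def IsActive (g : ℕ) : Prop :=
  ¬ Contains213Below σ g ∧ ¬ Splits132 σ g

end Gaps

lemma exists_lt_fin_succ {n : ℕ} {P : Fin (n + 1) → Fin (n + 1) → Prop} :
    (∃ i j, i < j ∧ P i j) ↔
      (∃ j : Fin n, P 0 j.succ) ∨ ∃ i j : Fin n, i < j ∧ P i.succ j.succ := by
  simp [Fin.exists_fin_succ]

lemma exists_lt_lt_fin_succ {n : ℕ} {P : Fin (n + 1) → Fin (n + 1) → Fin (n + 1) → Prop} :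
    (∃ i j k, i < j ∧ j < k ∧ P i j k) ↔
      (∃ j k : Fin n, j < k ∧ P 0 j.succ k.succ) ∨
        ∃ i j k : Fin n, i < j ∧ j < k ∧ P i.succ j.succ k.succ := by
  simp [Fin.exists_fin_succ]

lemma exists_lt_lt_lt_fin_succ {n : ℕ}
    {P : Fin (n + 1) → Fin (n + 1) → Fin (n + 1) → Fin (n + 1) → Prop} :
    (∃ i j k l, i < j ∧ j < k ∧ k < l ∧ P i j k l) ↔
      (∃ j k l : Fin n, j < k ∧ k < l ∧ P 0 j.succ k.succ l.succ) ∨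
        ∃ i j k l : Fin n, i < j ∧ j < k ∧ k < l ∧ P i.succ j.succ k.succ l.succ := by
  simp [Fin.exists_fin_succ]

section Prepend

variable {n : ℕ} {v : Fin (n + 1)} {σ : Equiv.Perm (Fin n)} {g h : ℕ}

lemma avoidsD_prepend :
    AvoidsD (prepend v σ) ↔ AvoidsD σ ∧ IsActive σ v := by
  simp only [AvoidsD, PatternAvoids, patternContains_p4213_iff, patternContains_p2143_iff,
    IsActive, Contains213Below, Splits132, exists_lt_lt_lt_fin_succ, prepend_zero, val_prepend_succ,
    bump_lt_bump, bump_lt_iff, lt_bump_iff]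
  rw [not_or, not_or, and_and_and_comm, and_comm]

lemma contains2413From_prepend_zero :
    Contains2413From (prepend v σ) 0 ↔ Contains2413From σ 0 ∨ Splits312 σ v := by
  simp only [Contains2413From, Splits312, Nat.zero_le, true_and,
    exists_lt_lt_lt_fin_succ, prepend_zero, val_prepend_succ, bump_lt_bump, bump_lt_iff,
    lt_bump_iff]
  exact or_comm

lemma contains2413From_prepend_succ {m : ℕ} :
    Contains2413From (prepend v σ) (m + 1) ↔ Contains2413From σ m := by
  simp only [Contains2413From, exists_lt_lt_lt_fin_succ, val_prepend_succ, bump_lt_bump,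
    Fin.val_zero, Nat.not_add_one_le_zero, Fin.val_succ, Nat.add_le_add_iff_right, false_and,
    exists_false, and_false, false_or]

lemma contains213Below_prepend_of_le (hg : g ≤ v) :
    Contains213Below (prepend v σ) g ↔ Contains213Below σ g := by
  simp only [Contains213Below, exists_lt_lt_fin_succ, prepend_zero, val_prepend_succ, bump_lt_bump,
    bump_lt_iff, lt_bump_iff, bump_lt_iff_of_le hg]
  refine or_iff_right ?_
  rintro ⟨_, _, _, _, _, _⟩
  omega

lemma contains213Below_prepend_succ (hg : v ≤ g) :
    Contains213Below (prepend v σ) (g + 1) ↔ Contains213Below σ g ∨ Splits12Below σ v g := by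
  simp only [Contains213Below, Splits12Below, exists_lt_lt_fin_succ, prepend_zero, val_prepend_succ,
    bump_lt_bump, bump_lt_iff, lt_bump_iff, bump_lt_succ_iff hg]
  exact or_comm

lemma splits132_prepend_of_le (hg : g ≤ v) : Splits132 (prepend v σ) g ↔ Splits132 σ g := by
  simp only [Splits132, exists_lt_lt_fin_succ, prepend_zero, val_prepend_succ, bump_lt_bump,
    bump_lt_iff_of_le hg, le_bump_iff_of_le hg]
  refine or_iff_right ?_
  rintro ⟨_, _, _, _, _⟩
  omega

lemma splits132_prepend_succ (hg : v ≤ g) :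
    Splits132 (prepend v σ) (g + 1) ↔ Splits132 σ g ∨ Contains21Above σ g := by
  simp only [Splits132, Contains21Above, exists_lt_lt_fin_succ, prepend_zero, val_prepend_succ,
    bump_lt_bump, bump_lt_succ_iff hg, succ_le_bump_iff hg, Nat.lt_succ_iff.2 hg, true_and]
  exact or_comm

lemma isActive_prepend_of_le (hg : g ≤ v) : IsActive (prepend v σ) g ↔ IsActive σ g := by
  rw [IsActive, contains213Below_prepend_of_le hg, splits132_prepend_of_le hg, IsActive]

lemma isActive_prepend_succ (hg : v ≤ g) : IsActive (prepend v σ) (g + 1) ↔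
    IsActive σ g ∧ ¬ Splits12Below σ v g ∧ ¬ Contains21Above σ g := by
  rw [IsActive, contains213Below_prepend_succ hg, splits132_prepend_succ hg, not_or, not_or,
    and_and_and_comm, IsActive]

lemma splits312_prepend_of_le (hg : g ≤ v) :
    Splits312 (prepend v σ) g ↔ Splits312 σ g ∨ Splits12Below σ g v := by
  simp only [Splits312, Splits12Below, exists_lt_lt_fin_succ, prepend_zero, val_prepend_succ,
    bump_lt_bump, bump_lt_iff, bump_lt_iff_of_le hg, le_bump_iff_of_le hg]
  exact or_comm

lemma contains21Above_prepend_of_le (hg : g ≤ v) :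
    Contains21Above (prepend v σ) g ↔ Contains21Above σ g ∨ g < v := by
  simp only [Contains21Above, exists_lt_fin_succ, prepend_zero, val_prepend_succ,
    bump_lt_bump, bump_lt_iff, le_bump_iff_of_le hg]
  rw [or_comm]
  refine or_congr_right ⟨?_, fun hlt => ⟨σ.symm ⟨g, by omega⟩, by simp, by simpa⟩⟩
  rintro ⟨_, _, _⟩
  omega

lemma contains21Above_prepend_succ (hg : v ≤ g) :
    Contains21Above (prepend v σ) (g + 1) ↔ Contains21Above σ g := by
  simp only [Contains21Above, exists_lt_fin_succ, prepend_zero, val_prepend_succ,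
    bump_lt_bump, bump_lt_iff, succ_le_bump_iff hg]
  refine or_iff_right ?_
  rintro ⟨_, _, _⟩
  omega

lemma splits12Below_prepend_of_le_succ (hg : g ≤ v) (hh : v ≤ h) :
    Splits12Below (prepend v σ) g (h + 1) ↔ Splits12Below σ g h := by
  simp only [Splits12Below, exists_lt_fin_succ, prepend_zero, val_prepend_succ,
    bump_lt_iff_of_le hg, bump_lt_succ_iff hh, le_bump_iff_of_le hg]
  refine or_iff_right ?_
  rintro ⟨_, _, _⟩
  omega

lemma splits12Below_prepend_succ_succ (hg : v ≤ g) (hgn : g < n) :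
    Splits12Below (prepend v σ) (g + 1) (g + 1 + 1) := by
  simp only [Splits12Below, exists_lt_fin_succ, prepend_zero, val_prepend_succ]
  exact Or.inl ⟨σ.symm ⟨g, hgn⟩, by omega, by simp [succ_le_bump_iff hg],
    by simp [bump_lt_succ_iff (hg.trans g.le_succ)]⟩

lemma Splits312.contains21Above (hg : Splits312 σ g) : Contains21Above σ g := by
  obtain ⟨i, j, k, hij, hjk, _, h₁, h₂⟩ := hg
  exact ⟨i, k, hij.trans hjk, h₁, h₂⟩

lemma Contains21Above.mono (hg : Contains21Above σ g) (hh : h ≤ g) : Contains21Above σ h := by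
  obtain ⟨i, j, hij, h₁, h₂⟩ := hg
  exact ⟨i, j, hij, hh.trans h₁, h₂⟩

lemma Splits12Below.mono {h' : ℕ} (hg : Splits12Below σ g h) (hh : h ≤ h') :
    Splits12Below σ g h' := by
  obtain ⟨i, j, hij, h₁, h₂, h₃⟩ := hg
  exact ⟨i, j, hij, h₁, h₂, h₃.trans_le hh⟩

lemma Splits312.contains21Above_or_splits12Below {g' : ℕ} (hg : Splits312 σ g) :
    Contains21Above σ g' ∨ Splits12Below σ g g' := by
  obtain ⟨i, j, k, hij, hjk, hj, hk, hik⟩ := hg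
  rcases le_or_gt g' (σ k) with hg' | hg'
  · exact Or.inl ⟨i, k, hij.trans hjk, hg', hik⟩
  · exact Or.inr ⟨j, k, hjk, hj, hk, hg'⟩

lemma not_splits12Below_self : ¬ Splits12Below σ g g := by
  rintro ⟨i, j, _, _, _, _⟩
  omega

end Prepend

/-! ### Minimal griddings -/

section LeftPts

variable {n : ℕ} {σ : Equiv.Perm (Fin n)}

lemma AvoidsD.not_4213 (hσ : AvoidsD σ) {a b c d : Fin n} (hab : a < b) (hbc : b < c)
    (hcd : c < d) (hcb : (σ c : ℕ) < σ b) (hbd : (σ b : ℕ) < σ d) (hda : (σ d : ℕ) < σ a) :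
    False :=
  hσ.1 (patternContains_p4213_iff.2 ⟨a, b, c, d, hab, hbc, hcd, hcb, hbd, hda⟩)

lemma AvoidsD.not_2143 (hσ : AvoidsD σ) {a b c d : Fin n} (hab : a < b) (hbc : b < c)
    (hcd : c < d) (hba : (σ b : ℕ) < σ a) (had : (σ a : ℕ) < σ d) (hdc : (σ d : ℕ) < σ c) :
    False :=
  hσ.2 (patternContains_p2143_iff.2 ⟨a, b, c, d, hab, hbc, hcd, hba, had, hdc⟩)

lemma val_apply_lt_of_not_le {x y : Fin n} (hxy : x ≠ y) (h : ¬ (σ x : ℕ) < σ y) :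
    (σ y : ℕ) < σ x :=
  lt_of_le_of_ne (not_lt.1 h) fun he => hxy (σ.injective (Fin.ext he)).symm

lemma gGridding_iff {j k : ℕ} : GGridding σ j k ↔
    j ≤ n ∧ k ≤ n ∧ (∀ i : Fin n, (i : ℕ) < j → (σ i : ℕ) < k) ∧
      (∀ x y : Fin n, x < y → (y : ℕ) < j → (σ x : ℕ) < σ y) ∧
      (∀ x y : Fin n, x < y → j ≤ (x : ℕ) → k ≤ σ x → k ≤ σ y → (σ x : ℕ) < σ y) ∧
      ∀ a b c : Fin n, a < b → b < c → j ≤ (a : ℕ) → (σ b : ℕ) < σ a → (σ a : ℕ) < σ c →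
        k ≤ σ c := by
  rw [GGridding, exists_p213_iff (Q := fun i => j ≤ (i : ℕ) ∧ (σ i : ℕ) + 1 ≤ k)]
  simp only [Nat.lt_succ_iff, Nat.succ_le_iff, Fin.lt_def]
  refine and_congr_right fun _ => and_congr_right fun _ => and_congr_right fun _ =>
    and_congr_right fun _ => and_congr_right fun _ => ⟨fun h a b c hab hbc ha hba hac => ?_, ?_⟩
  · by_contra! hc
    exact h ⟨a, b, c, hab, hbc, ⟨⟨ha, by omega⟩, ⟨by omega, by omega⟩, ⟨by omega, hc⟩⟩, hba, hac⟩
  · rintro h ⟨a, b, c, hab, hbc, ⟨⟨ha, -⟩, -, -, hc⟩, hba, hac⟩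
    exact (h a b c hab hbc ha hba hac).not_gt hc

lemma GGridding.not_contains2413From {j k : ℕ} (h : GGridding σ j k) :
    ¬ Contains2413From σ j := by
  obtain ⟨-, -, -, -, htop, hbot⟩ := gGridding_iff.1 h
  rintro ⟨a, b, c, d, hab, hbc, hcd, hj, hca, had, hdb⟩
  have hd : k ≤ σ d := hbot a c d (hab.trans hbc) hcd hj hca had
  have hbd : (σ b : ℕ) < σ d :=
    htop b d (hbc.trans hcd) (by omega) (hd.trans hdb.le) hd
  omega

lemma AvoidsD.lt_of_le_of_2413 (hσ : AvoidsD σ) {a b c d x : Fin n} (hxa : x ≤ a) (hab : a < b)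
    (hbc : b < c) (hcd : c < d) (hca : (σ c : ℕ) < σ a) (had : (σ a : ℕ) < σ d) :
    (σ x : ℕ) < σ d := by
  rcases hxa.eq_or_lt with rfl | hxa
  · exact had
  by_contra h
  exact hσ.not_4213 hxa (hab.trans hbc) hcd hca had
    (val_apply_lt_of_not_le (by omega) h)

lemma AvoidsD.lt_of_lt_of_le_of_2413 (hσ : AvoidsD σ) {a b c d x y : Fin n} (hxy : x < y)
    (hya : y ≤ a) (hab : a < b) (hbc : b < c) (hcd : c < d) (hca : (σ c : ℕ) < σ a)
    (had : (σ a : ℕ) < σ d) (hdb : (σ d : ℕ) < σ b) : (σ x : ℕ) < σ y := by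
  by_contra h
  exact hσ.not_2143 hxy (hya.trans_lt hab) (hbc.trans hcd) (val_apply_lt_of_not_le hxy.ne h)
    (hσ.lt_of_le_of_2413 (hxy.le.trans hya) hab hbc hcd hca had) hdb

variable (σ) in
/-- The least value of the 3 in an occurrence of 213 at positions at least `j` (or `n` if there is
none): the largest `k` for which the entries at these positions with value below `k` avoid 213. -/
noncomputable def valueCutoff (j : ℕ) : ℕ :=
  sInf {x | x = n ∨ ∃ a b c : Fin n, a < b ∧ b < c ∧ j ≤ (a : ℕ) ∧
    (σ b : ℕ) < σ a ∧ (σ a : ℕ) < σ c ∧ (σ c : ℕ) = x}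

lemma valueCutoff_le (j : ℕ) : valueCutoff σ j ≤ n := Nat.sInf_le (Or.inl rfl)

lemma valueCutoff_le_of_213 {j : ℕ} {a b c : Fin n} (hab : a < b) (hbc : b < c)
    (ha : j ≤ (a : ℕ)) (hba : (σ b : ℕ) < σ a) (hac : (σ a : ℕ) < σ c) :
    valueCutoff σ j ≤ σ c :=
  Nat.sInf_le (Or.inr ⟨a, b, c, hab, hbc, ha, hba, hac, rfl⟩)

lemma AvoidsD.lt_of_valueCutoff_le (hσ : AvoidsD σ) {j : ℕ} (hj : ¬ Contains2413From σ j)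
    {x y : Fin n} (hxy : x < y) (hkx : valueCutoff σ j ≤ σ x)
    (hky : valueCutoff σ j ≤ σ y) : (σ x : ℕ) < σ y := by
  by_contra h
  have hyx := val_apply_lt_of_not_le hxy.ne h
  rcases Nat.sInf_mem (s := {x | x = n ∨ ∃ a b c : Fin n, a < b ∧ b < c ∧ j ≤ (a : ℕ) ∧
      (σ b : ℕ) < σ a ∧ (σ a : ℕ) < σ c ∧ (σ c : ℕ) = x}) ⟨n, Or.inl rfl⟩ with
    hk | ⟨a, b, c, hab, hbc, ha, hba, hac, hc⟩
  · rw [← valueCutoff] at hk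
    have := (σ x).isLt
    omega
  · rw [← valueCutoff] at hc
    rcases lt_trichotomy x a with hxa | rfl | hax
    · exact hσ.not_4213 hxa hab hbc hba hac (by omega)
    · omega
    rcases lt_trichotomy x b with hxb | rfl | hbx
    · exact hj ⟨a, x, b, c, hax, hxb, hbc, ha, hba, hac, by omega⟩
    · omega
    · exact hσ.not_2143 hab hbx hxy hba (by omega) hyx

lemma AvoidsD.gGridding_valueCutoff (hσ : AvoidsD σ) {j : ℕ} (hj : ¬ Contains2413From σ j)
    (hmin : j = 0 ∨ Contains2413From σ (j - 1)) : GGridding σ j (valueCutoff σ j) := by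
  suffices hleft : j ≤ n ∧ (∀ i : Fin n, (i : ℕ) < j → (σ i : ℕ) < valueCutoff σ j) ∧
      ∀ x y : Fin n, x < y → (y : ℕ) < j → (σ x : ℕ) < σ y from
    gGridding_iff.2 ⟨hleft.1, valueCutoff_le j, hleft.2.1, hleft.2.2,
      fun x y hxy _ hkx hky => hσ.lt_of_valueCutoff_le hj hxy hkx hky,
      fun a b c hab hbc ha hba hac => valueCutoff_le_of_213 hab hbc ha hba hac⟩
  rcases hmin with rfl | ⟨a, b, c, d, hab, hbc, hcd, ha, hca, had, hdb⟩
  · exact ⟨n.zero_le, by simp, by simp⟩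
  have haj : (a : ℕ) < j := by
    by_contra h
    exact hj ⟨a, b, c, d, hab, hbc, hcd, not_lt.1 h, hca, had, hdb⟩
  have hd : (σ d : ℕ) ≤ valueCutoff σ j := by
    by_contra h
    have := hσ.lt_of_valueCutoff_le hj (hbc.trans hcd) (by omega) (not_le.1 h).le
    omega
  exact ⟨by omega,
    fun i hi => (hσ.lt_of_le_of_2413 (by omega) hab hbc hcd hca had).trans_le hd,
    fun x y hxy hy => hσ.lt_of_lt_of_le_of_2413 hxy (by omega) hab hbc hcd hca had hdb⟩

lemma not_contains2413From_length : ¬ Contains2413From σ n := by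
  rintro ⟨a, _, _, _, _, _, _, ha, _⟩
  omega

lemma AvoidsD.leftPts_eq_sInf (hσ : AvoidsD σ) :
    leftPts σ = sInf {j | ¬ Contains2413From σ j} := by
  have hgrid : ∃ k, GGridding σ (sInf {j | ¬ Contains2413From σ j}) k := by
    refine ⟨_, hσ.gGridding_valueCutoff
      (Nat.sInf_mem (s := {j | ¬ Contains2413From σ j}) ⟨n, not_contains2413From_length⟩)
      (or_iff_not_imp_left.2 fun h => ?_)⟩
    by_contra hpred
    have hle : sInf {j | ¬ Contains2413From σ j} ≤ sInf {j | ¬ Contains2413From σ j} - 1 :=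
      Nat.sInf_le hpred
    omega
  refine le_antisymm (Nat.sInf_le hgrid) (Nat.sInf_le ?_)
  obtain ⟨k, hk⟩ := Nat.sInf_mem (s := {j | ∃ k, GGridding σ j k}) ⟨_, hgrid⟩
  exact hk.not_contains2413From

lemma AvoidsD.leftPts_eq_zero (hσ : AvoidsD σ) (h : ¬ Contains2413From σ 0) : leftPts σ = 0 := by
  rw [hσ.leftPts_eq_sInf]
  exact Nat.sInf_eq_zero.2 (Or.inl h)

lemma AvoidsD.leftPts_prepend {v : Fin (n + 1)} (hv : AvoidsD (prepend v σ))
    (h : Contains2413From (prepend v σ) 0) : leftPts (prepend v σ) = leftPts σ + 1 := by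
  have hpos : 1 ≤ sInf {j | ¬ Contains2413From (prepend v σ) j} :=
    le_csInf ⟨n + 1, not_contains2413From_length⟩ fun j hj =>
      Nat.one_le_iff_ne_zero.2 fun hj0 => hj (hj0 ▸ h)
  rw [hv.leftPts_eq_sInf, (avoidsD_prepend.1 hv).1.leftPts_eq_sInf, ← Nat.sInf_add hpos]
  simp only [contains2413From_prepend_succ]

end LeftPts

/-! ### The generating tree -/

section SortedLists

lemma mem_iff_of_suffix {Q S : List ℕ} {v g : ℕ} (hS : S.Pairwise (· > ·)) (hv : v :: Q <:+ S)
    (hg : g ≤ v) : g ∈ S ↔ g ∈ v :: Q := by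
  obtain ⟨P, rfl⟩ := hv
  rw [List.mem_append, or_iff_right fun hP => ?_]
  exact hg.not_gt ((List.pairwise_append.1 hS).2.2 g hP v List.mem_cons_self)

lemma lt_of_suffix {Q S : List ℕ} {v g : ℕ} (hS : S.Pairwise (· > ·)) (hv : v :: Q <:+ S)
    (hg : g ∈ Q) : g < v :=
  List.rel_of_pairwise_cons (hS.sublist hv.sublist) hg

lemma le_of_suffix {Q S : List ℕ} {v g : ℕ} (hS : S.Pairwise (· > ·)) (hv : v :: Q <:+ S)
    (hg : g ∈ v :: Q) : g ≤ v := by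
  rcases List.mem_cons.1 hg with rfl | hg
  · exact le_rfl
  · exact (lt_of_suffix hS hv hg).le

lemma suffix_of_cons_suffix_cons {α : Type*} {a b : α} {l m : List α} (h : a :: l <:+ b :: m) :
    l <:+ m := by
  rcases List.suffix_cons_iff.1 h with heq | h
  · rw [(List.cons.inj heq).2]
  · exact (List.suffix_cons a l).trans h

/-- The sites in a list of blocks; the block `(b, I)` stands for the inner sites `I` followed by the
bounding site `b`. -/
def flattenBlocks : List (ℕ × List ℕ) → List ℕ
  | [] => []
  | (b, I) :: L => I ++ b :: flattenBlocks L

lemma flattenBlocks_append (P L : List (ℕ × List ℕ)) :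
    flattenBlocks (P ++ L) = flattenBlocks P ++ flattenBlocks L := by
  induction P with
  | nil => rfl
  | cons a P ih => simp [flattenBlocks, ih]

lemma flattenBlocks_suffix {L M : List (ℕ × List ℕ)} (h : L <:+ M) :
    flattenBlocks L <:+ flattenBlocks M := by
  obtain ⟨P, rfl⟩ := h
  exact flattenBlocks_append P L ▸ List.suffix_append _ _

lemma fst_mem_flattenBlocks {b : ℕ × List ℕ} {L : List (ℕ × List ℕ)} (hb : b ∈ L) :
    b.1 ∈ flattenBlocks L := by
  obtain ⟨P, Q, rfl⟩ := List.append_of_mem hb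
  simp [flattenBlocks_append, flattenBlocks]

lemma mem_flattenBlocks_of_mem_snd {b : ℕ × List ℕ} {L : List (ℕ × List ℕ)} (hb : b ∈ L) {g : ℕ}
    (hg : g ∈ b.2) : g ∈ flattenBlocks L := by
  obtain ⟨P, Q, rfl⟩ := List.append_of_mem hb
  simp [flattenBlocks_append, flattenBlocks, hg]

end SortedLists

section Tree

variable {n : ℕ} {σ : Equiv.Perm (Fin n)} {v : Fin (n + 1)}

/-- The permutation `σ` avoids 4213 and 2143, and the decreasing list `G` consists of its active
sites. -/
structure HasActiveSites (σ : Equiv.Perm (Fin n)) (G : List ℕ) : Prop where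
  avoids : AvoidsD σ
  sorted : G.Pairwise (· > ·)
  le : ∀ g ∈ G, g ≤ n
  isActive_iff : ∀ g ≤ n, (IsActive σ g ↔ g ∈ G)

/-- The node of the generating tree at a permutation containing 2413, where `G` lists the active
sites. -/
structure SiteLabel (σ : Equiv.Perm (Fin n)) (G : List ℕ) : Prop extends HasActiveSites σ G where
  contains2413 : Contains2413From σ 0
  contains21Above : ∀ g ∈ G, Contains21Above σ g

/-- The node of the generating tree at a permutation avoiding 2413. Its active sites are, from the
greatest to the least, `top` and the sites in the blocks `(β, I) :: L`; a new first entry creates a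
2413 exactly at the inner sites of `L`. The flag `fresh` records whether no 21 lies above `β`. -/
structure BlockLabel (σ : Equiv.Perm (Fin n)) (fresh : Bool) (top β : ℕ) (I : List ℕ)
    (L : List (ℕ × List ℕ)) : Prop extends
    HasActiveSites σ (top :: flattenBlocks ((β, I) :: L)) where
  avoids2413 : ¬ Contains2413From σ 0
  top_above : ¬ Contains21Above σ top
  inner : ∀ g ∈ I, Splits12Below σ g (g + 1) ∧ ¬ Contains21Above σ g
  outer : ∀ b ∈ L, ∀ g ∈ b.2, Splits312 σ g
  bound : ∀ b ∈ (β, I) :: L, ¬ Splits12Below σ b.1 top ∧ ¬ Splits312 σ b.1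
  fresh_iff : Contains21Above σ β ↔ fresh = false
  above : ∀ g < β, Contains21Above σ g

lemma HasActiveSites.exists_fin_eq {G : List ℕ} (h : HasActiveSites σ G) {g : ℕ} (hg : g ∈ G) :
    ∃ v : Fin (n + 1), (v : ℕ) = g :=
  ⟨⟨g, Nat.lt_succ_of_le (h.le g hg)⟩, rfl⟩

lemma HasActiveSites.isActive {G : List ℕ} (h : HasActiveSites σ G) {g : ℕ} (hg : g ∈ G) :
    IsActive σ g :=
  (h.isActive_iff g (h.le g hg)).2 hg

lemma HasActiveSites.prepend {G N Q : List ℕ} (h : HasActiveSites σ G) (hv : (v : ℕ) :: Q <:+ G)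
    (hN : N.Pairwise (· > ·)) (hle : ∀ g ∈ N, (v : ℕ) < g ∧ g ≤ n + 1)
    (hmem : ∀ g, (v : ℕ) ≤ g → g ≤ n →
      (IsActive σ g ∧ ¬ Splits12Below σ v g ∧ ¬ Contains21Above σ g ↔ g + 1 ∈ N)) :
    HasActiveSites (prepend v σ) (N ++ (v : ℕ) :: Q) where
  avoids := avoidsD_prepend.2 ⟨h.avoids, h.isActive (hv.subset List.mem_cons_self)⟩
  sorted := List.pairwise_append.2 ⟨hN, h.sorted.sublist hv.sublist, fun _ hg _ hg' =>
    (le_of_suffix h.sorted hv hg').trans_lt (hle _ hg).1⟩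
  le g hg := by
    rcases List.mem_append.1 hg with hg | hg
    · exact (hle g hg).2
    · exact (le_of_suffix h.sorted hv hg).trans (Fin.is_lt v).le
  isActive_iff g hg := by
    rw [List.mem_append]
    rcases le_or_gt g v with hgv | hgv
    · rw [isActive_prepend_of_le hgv, h.isActive_iff g (by omega),
        mem_iff_of_suffix h.sorted hv hgv, or_iff_right fun hgN => hgv.not_gt (hle g hgN).1]
    · obtain ⟨g, rfl⟩ := Nat.exists_eq_add_one_of_ne_zero (Nat.ne_zero_of_lt hgv)
      rw [isActive_prepend_succ (by omega), hmem g (by omega) (by omega),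
        or_iff_left fun hgQ => hgv.not_ge (le_of_suffix h.sorted hv hgQ)]

lemma SiteLabel.prepend {G Q : List ℕ} (h : SiteLabel σ G) (hv : (v : ℕ) :: Q <:+ G) :
    SiteLabel (prepend v σ) ((v : ℕ) :: Q) where
  toHasActiveSites := by
    refine h.toHasActiveSites.prepend (N := []) hv List.Pairwise.nil (by simp) fun g _ hgn => ?_
    exact iff_of_false (fun hg => hg.2.2 (h.contains21Above g ((h.isActive_iff g hgn).1 hg.1)))
      List.not_mem_nil
  contains2413 := contains2413From_prepend_zero.2 (Or.inl h.contains2413)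
  contains21Above g hg := (contains21Above_prepend_of_le (le_of_suffix h.sorted hv hg)).2
    (Or.inl (h.contains21Above g (hv.subset hg)))

section BlockLabel

variable {fresh : Bool} {top β : ℕ} {I : List ℕ} {L : List (ℕ × List ℕ)}

lemma cons_flattenBlocks_suffix {b : ℕ} {J Q : List ℕ} {L' : List (ℕ × List ℕ)}
    (hL : (b, J) :: L' <:+ L) (hv : (v : ℕ) :: Q <:+ J) :
    (v : ℕ) :: flattenBlocks ((b, Q) :: L') <:+ flattenBlocks L := by
  refine List.IsSuffix.trans ?_ (flattenBlocks_suffix hL)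
  obtain ⟨P, rfl⟩ := hv
  exact ⟨P, by simp [flattenBlocks]⟩

lemma BlockLabel.prepend_outer (h : BlockLabel σ fresh top β I L) {b : ℕ} {J Q : List ℕ}
    {L' : List (ℕ × List ℕ)} (hL : (b, J) :: L' <:+ L) (hv : (v : ℕ) :: Q <:+ J) :
    SiteLabel (prepend v σ) ((v : ℕ) :: flattenBlocks ((b, Q) :: L')) := by
  have hsuffix : (v : ℕ) :: flattenBlocks ((b, Q) :: L') <:+ top :: flattenBlocks ((β, I) :: L) :=
    (cons_flattenBlocks_suffix hL hv).trans
      ((flattenBlocks_suffix (List.suffix_cons _ _)).trans (List.suffix_cons _ _))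
  have h312 : Splits312 σ v :=
    h.outer (b, J) (hL.subset List.mem_cons_self) v (hv.subset List.mem_cons_self)
  refine ⟨h.toHasActiveSites.prepend (N := []) hsuffix List.Pairwise.nil (by simp) fun g _ _ => ?_,
    contains2413From_prepend_zero.2 (Or.inr h312), fun g hg => ?_⟩
  · exact iff_of_false (fun hg => h312.contains21Above_or_splits12Below.elim hg.2.2 hg.2.1)
      List.not_mem_nil
  · rw [contains21Above_prepend_of_le (le_of_suffix h.sorted hsuffix hg)]
    rcases List.mem_cons.1 hg with rfl | hg
    · exact Or.inl h312.contains21Above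
    · exact Or.inr (lt_of_suffix h.sorted hsuffix hg)

lemma HasActiveSites.prepend_inner {S Q : List ℕ} (h : HasActiveSites σ (top :: S))
    (hv : (v : ℕ) :: Q <:+ top :: S) (hv21 : ¬ Contains21Above σ v)
    (hv12 : (v : ℕ) = top ∨ Splits12Below σ v (v + 1)) :
    HasActiveSites (_root_.prepend v σ) ((v + 1 : ℕ) :: (v : ℕ) :: Q) := by
  refine h.prepend (N := [(v + 1 : ℕ)]) hv (List.pairwise_singleton _ _)
    (fun g hg => by rw [List.mem_singleton] at hg; omega) fun g hvg hgn => ?_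
  rw [List.mem_singleton, Nat.add_right_cancel_iff]
  constructor
  · rintro ⟨hactive, h12, -⟩
    have hgtop : g ≤ top :=
      le_of_suffix h.sorted List.suffix_rfl ((h.isActive_iff g hgn).1 hactive)
    by_contra hne
    rcases hv12 with hvtop | hv12
    · omega
    · exact h12 (hv12.mono (by omega))
  · rintro rfl
    exact ⟨h.isActive (hv.subset List.mem_cons_self), not_splits12Below_self, hv21⟩

lemma BlockLabel.prepend_inner (h : BlockLabel σ fresh top β I L) {Q : List ℕ}
    (hv : (v : ℕ) :: Q <:+ top :: I) :
    BlockLabel (prepend v σ) true (v + 1) v [] ((β, Q) :: L) := by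
  have hsuffix : (v : ℕ) :: flattenBlocks ((β, Q) :: L) <:+ top :: flattenBlocks ((β, I) :: L) := by
    obtain ⟨P, hP⟩ := hv
    exact ⟨P, by rw [flattenBlocks, flattenBlocks, ← List.cons_append (a := top), ← hP,
      List.append_assoc, List.cons_append]⟩
  have hlt : ∀ g ∈ flattenBlocks ((β, Q) :: L), g < v := fun g hg =>
    lt_of_suffix h.sorted hsuffix hg
  have hvtop : (v : ℕ) ≤ top :=
    le_of_suffix h.sorted List.suffix_rfl (hsuffix.subset List.mem_cons_self)
  have hvI : (v : ℕ) = top ∨ (v : ℕ) ∈ I := List.mem_cons.1 (hv.subset List.mem_cons_self)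
  have hQI : Q ⊆ I := fun g hg =>
    (List.mem_cons.1 (hv.subset (List.mem_cons_of_mem _ hg))).resolve_left
      fun hgtop => (hlt g (by simp [flattenBlocks, hg])).not_ge (hgtop ▸ hvtop)
  have hv21 : ¬ Contains21Above σ v :=
    hvI.elim (fun hv => hv ▸ h.top_above) fun hv => (h.inner _ hv).2
  have hv312 : ¬ Splits312 σ v := fun h312 => hv21 h312.contains21Above
  have hbound : ∀ b ∈ (β, Q) :: L, ¬ Splits12Below σ b.1 top ∧ ¬ Splits312 σ b.1 :=
    List.forall_mem_cons.2 (List.forall_mem_cons.1 h.bound)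
  refine ⟨h.toHasActiveSites.prepend_inner hsuffix hv21 (hvI.imp_right fun hv => (h.inner _ hv).1),
    ?_, by rwa [contains21Above_prepend_succ le_rfl], by simp, fun b hb g hg => ?_,
    List.forall_mem_cons.2 ⟨?_, fun b hb => ?_⟩, ?_, fun g hg => ?_⟩
  · rw [contains2413From_prepend_zero, not_or]
    exact ⟨h.avoids2413, hv312⟩
  · have hgv : g < v := hlt g (mem_flattenBlocks_of_mem_snd hb hg)
    rw [splits312_prepend_of_le hgv.le]
    rcases List.mem_cons.1 hb with rfl | hb
    · exact Or.inr ((h.inner g (hQI hg)).1.mono hgv)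
    · exact Or.inl (h.outer b hb g hg)
  · rw [splits12Below_prepend_of_le_succ le_rfl le_rfl, splits312_prepend_of_le le_rfl, not_or]
    exact ⟨not_splits12Below_self, hv312, not_splits12Below_self⟩
  · have hbv : b.1 ≤ v := (hlt _ (fst_mem_flattenBlocks hb)).le
    rw [splits12Below_prepend_of_le_succ hbv le_rfl, splits312_prepend_of_le hbv, not_or]
    exact ⟨fun h12 => (hbound b hb).1 (h12.mono hvtop), (hbound b hb).2,
      fun h12 => (hbound b hb).1 (h12.mono hvtop)⟩
  · rw [contains21Above_prepend_of_le le_rfl]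
    exact iff_of_false (by simpa) (by simp)
  · exact (contains21Above_prepend_of_le hg.le).2 (Or.inr hg)

lemma cons_flattenBlocks_suffix_of_suffix {b : ℕ} {J : List ℕ} {L' : List (ℕ × List ℕ)}
    (hL : (b, J) :: L' <:+ (β, I) :: L) : b :: flattenBlocks L' <:+ β :: flattenBlocks L := by
  rcases List.suffix_cons_iff.1 hL with heq | hL
  · obtain ⟨⟨rfl, -⟩, rfl⟩ := by simpa only [List.cons.injEq, Prod.mk.injEq] using heq
    exact List.suffix_rfl
  · exact (List.suffix_append J _).trans
      ((flattenBlocks_suffix hL).trans (List.suffix_cons _ _))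

lemma BlockLabel.not_contains21Above_iff (h : BlockLabel σ fresh top β I L) {g : ℕ}
    (hg : g ∈ top :: flattenBlocks ((β, I) :: L)) :
    ¬ Contains21Above σ g ↔ g ∈ top :: (I ++ if fresh then [β] else []) := by
  have hupper : g ∈ (if fresh then [β] else []) ↔ fresh = true ∧ g = β := by cases fresh <;> simp
  rw [List.mem_cons, List.mem_append, hupper]
  constructor
  · intro h21
    rw [flattenBlocks, List.mem_cons, List.mem_append, List.mem_cons] at hg
    rcases hg with hg | hg | rfl | hg
    · exact Or.inl hg
    · exact Or.inr (Or.inl hg)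
    · exact Or.inr (Or.inr ⟨by rwa [h.fresh_iff, Bool.not_eq_false] at h21, rfl⟩)
    · have hsuffix : β :: flattenBlocks L <:+ top :: flattenBlocks ((β, I) :: L) :=
        (List.suffix_append I _).trans (List.suffix_cons _ _)
      exact absurd (h.above g (lt_of_suffix h.sorted hsuffix hg)) h21
  · rintro (rfl | hg | ⟨hfresh, rfl⟩)
    · exact h.top_above
    · exact (h.inner g hg).2
    · simp [h.fresh_iff, hfresh]

lemma HasActiveSites.prepend_bound {P S Q : List ℕ} (h : HasActiveSites σ (top :: S))
    (hv : (v : ℕ) :: Q <:+ S) (hv12 : ¬ Splits12Below σ v top) (hP : P.Sublist S)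
    (hPv : ∀ g ∈ P, (v : ℕ) ≤ g)
    (hP21 : ∀ g ∈ top :: S, (¬ Contains21Above σ g ↔ g ∈ top :: P)) :
    HasActiveSites (_root_.prepend v σ) ((top + 1) :: (P.map Nat.succ ++ (v : ℕ) :: Q)) := by
  have hvtop : (v : ℕ) < top := List.rel_of_pairwise_cons h.sorted (hv.subset List.mem_cons_self)
  have hvP : ∀ g ∈ top :: P, (v : ℕ) ≤ g := List.forall_mem_cons.2 ⟨hvtop.le, hPv⟩
  have hPS := hP.cons_cons top
  refine h.prepend (N := (top :: P).map Nat.succ) (hv.trans (List.suffix_cons _ _))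
    ((h.sorted.sublist hPS).map _ fun _ _ => Nat.succ_lt_succ)
    (List.forall_mem_map.2 fun g hg =>
      ⟨Nat.lt_succ_of_le (hvP g hg), Nat.succ_le_succ (h.le g (hPS.subset hg))⟩)
    fun g _ hgn => ?_
  rw [List.mem_map_of_injective Nat.succ_injective, h.isActive_iff g hgn]
  constructor
  · rintro ⟨hg, -, hg21⟩
    exact (hP21 g hg).1 hg21
  · intro hg
    have hgtop : g ≤ top := le_of_suffix h.sorted List.suffix_rfl (hPS.subset hg)
    exact ⟨hPS.subset hg, fun h12 => hv12 (h12.mono hgtop), (hP21 g (hPS.subset hg)).2 hg⟩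

lemma sublist_flattenBlocks_cons :
    (I ++ if fresh then [β] else []).Sublist (flattenBlocks ((β, I) :: L)) :=
  (List.Sublist.refl I).append (by cases fresh <;> simp)

lemma BlockLabel.of_mem_append (h : BlockLabel σ fresh top β I L) {g : ℕ}
    (hg : g ∈ I ++ if fresh then [β] else []) :
    β ≤ g ∧ g < top ∧ ¬ Contains21Above σ g := by
  have hgS : g ∈ flattenBlocks ((β, I) :: L) := sublist_flattenBlocks_cons.subset hg
  have h21 : ¬ Contains21Above σ g :=
    (h.not_contains21Above_iff (List.mem_cons_of_mem _ hgS)).2 (List.mem_cons_of_mem _ hg)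
  exact ⟨not_lt.1 fun hgβ => h21 (h.above g hgβ), List.rel_of_pairwise_cons h.sorted hgS, h21⟩

lemma BlockLabel.prepend_bound (h : BlockLabel σ fresh top β I L) {fresh' : Bool} {J : List ℕ}
    {L' : List (ℕ × List ℕ)} (hL : ((v : ℕ), J) :: L' <:+ (β, I) :: L)
    (hfresh : Contains21Above σ v ↔ fresh' = false) :
    BlockLabel (prepend v σ) fresh' (top + 1) v
      ((I ++ if fresh then [β] else []).map Nat.succ) L' := by
  have hsuffixβ : (v : ℕ) :: flattenBlocks L' <:+ β :: flattenBlocks L :=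
    cons_flattenBlocks_suffix_of_suffix hL
  have hsuffix : (v : ℕ) :: flattenBlocks L' <:+ flattenBlocks ((β, I) :: L) :=
    hsuffixβ.trans (List.suffix_append I _)
  have hbound (K : List ℕ) : ∀ b ∈ ((v : ℕ), K) :: L',
      ¬ Splits12Below σ b.1 top ∧ ¬ Splits312 σ b.1 :=
    List.forall_mem_cons.2 (List.forall_mem_cons.1 fun b hb => h.bound b (hL.subset hb))
  have hvβ : (v : ℕ) ≤ β :=
    le_of_suffix (List.pairwise_append.1 (List.pairwise_cons.1 h.sorted).2).2.1 List.suffix_rfl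
      (hsuffixβ.subset List.mem_cons_self)
  have hvtop : (v : ℕ) < top :=
    List.rel_of_pairwise_cons h.sorted (hsuffix.subset List.mem_cons_self)
  have htop : top ≤ n := h.le top List.mem_cons_self
  have hlt : ∀ g ∈ flattenBlocks L', g < v := fun g hg =>
    lt_of_suffix h.sorted (hsuffix.trans (List.suffix_cons _ _)) hg
  refine ⟨h.toHasActiveSites.prepend_bound hsuffix (hbound J _ List.mem_cons_self).1
      sublist_flattenBlocks_cons (fun g hg => hvβ.trans (h.of_mem_append hg).1)
      fun g => h.not_contains21Above_iff,
    ?_, by rw [contains21Above_prepend_succ hvtop.le]; exact h.top_above,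
    List.forall_mem_map.2 fun g hg => ?_, fun b hb g hg => ?_, fun b hb => ?_,
    by rw [contains21Above_prepend_of_le le_rfl, or_iff_left (lt_irrefl _), hfresh],
    fun g hg => (contains21Above_prepend_of_le hg.le).2 (Or.inr hg)⟩
  · rw [contains2413From_prepend_zero, not_or]
    exact ⟨h.avoids2413, (hbound J _ List.mem_cons_self).2⟩
  · obtain ⟨hβg, hgtop, h21⟩ := h.of_mem_append hg
    have hvg : (v : ℕ) ≤ g := hvβ.trans hβg
    exact ⟨splits12Below_prepend_succ_succ hvg (hgtop.trans_le htop),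
      by rwa [contains21Above_prepend_succ hvg]⟩
  · have hgv : g < v := hlt g (mem_flattenBlocks_of_mem_snd hb hg)
    have hbL : b ∈ L := (suffix_of_cons_suffix_cons hL).subset hb
    exact (splits312_prepend_of_le hgv.le).2 (Or.inl (h.outer b hbL g hg))
  · have hbv : b.1 ≤ v := by
      rcases List.mem_cons.1 hb with rfl | hb
      · exact le_rfl
      · exact (hlt _ (fst_mem_flattenBlocks hb)).le
    obtain ⟨hb12, hb312⟩ := hbound _ b hb
    rw [splits12Below_prepend_of_le_succ hbv hvtop.le, splits312_prepend_of_le hbv, not_or]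
    exact ⟨hb12, hb312, fun h12 => hb12 (h12.mono hvtop.le)⟩

end BlockLabel

end Tree

/-! ### Weighted counts along the generating tree -/

section Weights

variable {R : Type*} [CommRing R] (w : R)

open scoped Classical in
/-- The sum of `w ^ leftPts τ` over the `τ` avoiding 4213 and 2143 that arise from `σ` by prepending
`m` entries. -/
noncomputable def extensionWeight : ℕ → ∀ {n : ℕ}, Equiv.Perm (Fin n) → R
  | 0, _, σ => if AvoidsD σ then w ^ leftPts σ else 0
  | m + 1, _, σ => ∑ v, extensionWeight m (prepend v σ)

lemma sum_extensionWeight (m n : ℕ) : ∑ σ : Equiv.Perm (Fin n), extensionWeight w m σ =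
    ∑ τ : Equiv.Perm (Fin (n + m)), extensionWeight w 0 τ := by
  induction m generalizing n with
  | zero => rfl
  | succ m ih =>
    simp only [extensionWeight.eq_2]
    rw [← sum_perm_fin_succ (fun τ => extensionWeight w m τ), ih, Nat.succ_add_eq_add_succ]

lemma extensionWeight_eq_zero {n : ℕ} {σ : Equiv.Perm (Fin n)} (h : ¬ AvoidsD σ) (m : ℕ) :
    extensionWeight w m σ = 0 := by
  induction m generalizing n with
  | zero => rw [extensionWeight, if_neg h]
  | succ m ih =>
    rw [extensionWeight]
    exact Finset.sum_eq_zero fun v _ => ih fun h' => h (avoidsD_prepend.1 h').1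

lemma HasActiveSites.exists_extensionWeight_succ {n : ℕ} {σ : Equiv.Perm (Fin n)} {G : List ℕ}
    (h : HasActiveSites σ G) (m : ℕ) :
    ∃ F : ℕ → R, (∀ v : Fin (n + 1), F v = extensionWeight w m (_root_.prepend v σ)) ∧
      extensionWeight w (m + 1) σ = (G.map F).sum := by
  let F : ℕ → R := fun g => extensionWeight w m (_root_.prepend (Fin.ofNat (n + 1) g) σ)
  have hF (v : Fin (n + 1)) : F v = extensionWeight w m (_root_.prepend v σ) := by
    simp only [F, Fin.ofNat_val_eq_self]
  refine ⟨F, hF, ?_⟩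
  rw [extensionWeight, ← List.sum_toFinset _ (h.sorted.imp ne_of_gt), ← Finset.sum_congr rfl
    fun v _ => hF v, Fin.sum_univ_eq_sum_range F (n + 1)]
  refine (Finset.sum_subset (fun g hg => ?_) fun g hg hgG => ?_).symm
  · exact Finset.mem_range_succ_iff.2 (h.le g (List.mem_toFinset.1 hg))
  · have hgn : g ≤ n := Finset.mem_range_succ_iff.1 hg
    obtain ⟨v, rfl⟩ : ∃ v : Fin (n + 1), (v : ℕ) = g := ⟨⟨g, Nat.lt_succ_of_le hgn⟩, rfl⟩
    rw [hF]
    refine extensionWeight_eq_zero w (fun hv => hgG ?_) m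
    exact List.mem_toFinset.2 ((h.isActive_iff v hgn).1 (avoidsD_prepend.1 hv).2)

lemma sum_map_eq_sum_range {G : List ℕ} {F H : ℕ → R}
    (h : ∀ v Q, v :: Q <:+ G → F v = H Q.length) :
    (G.map F).sum = ∑ i ∈ Finset.range G.length, H i := by
  induction G with
  | nil => rfl
  | cons a G ih =>
    rw [List.map_cons, List.sum_cons, List.length_cons, Finset.sum_range_succ, add_comm,
      h a G List.suffix_rfl, ih fun v Q hQ => h v Q (hQ.trans (List.suffix_cons a G))]

/-- The total of `w ^ leftPts τ / w ^ leftPts σ` over the `τ` obtained by prepending `m` entries to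
a permutation `σ` that contains 2413 and has `r` active sites. -/
def siteWeight : ℕ → ℕ → R
  | 0, _ => 1
  | m + 1, r => w * ∑ i ∈ Finset.range r, siteWeight m (i + 1)

/-- The number of sites in a list of blocks, given by their numbers of inner sites. -/
def blockSize : List ℕ → ℕ
  | [] => 0
  | c :: L => c + 1 + blockSize L

/-- A sum over the sites of a list of blocks: a bounding site contributes `f` of the blocks below
it, and an inner site contributes `k` of the number of sites below it. -/
def blockSum (f : List ℕ → R) (k : ℕ → R) : List ℕ → R
  | [] => 0
  | c :: L => ∑ i ∈ Finset.range c, k (i + 1 + blockSize L) + f L + blockSum f k L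

/-- The total of `w ^ leftPts τ` over the `τ` obtained by prepending `m` entries to a permutation
with a `BlockLabel` whose first block has `e` inner sites and whose other blocks have numbers of
inner sites `L`. -/
def blockWeight : ℕ → Bool → ℕ → List ℕ → R
  | 0, _, _, _ => 1
  | m + 1, fresh, e, L => ∑ i ∈ Finset.range (e + 1), blockWeight m true 0 (i :: L)
      + blockWeight m fresh (e + fresh.toNat) L
      + blockSum (blockWeight m false (e + fresh.toNat)) (fun r => w * siteWeight w m (r + 1)) L

/-- The numbers of inner sites of the blocks of a list. -/
abbrev innerCounts (L : List (ℕ × List ℕ)) : List ℕ := L.map fun b => b.2.length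

lemma length_flattenBlocks (L : List (ℕ × List ℕ)) :
    (flattenBlocks L).length = blockSize (innerCounts L) := by
  induction L with
  | nil => rfl
  | cons b L ih =>
    rw [flattenBlocks, List.length_append, List.length_cons, ih, innerCounts, innerCounts,
      List.map_cons, blockSize, add_right_comm, add_assoc]

lemma sum_map_flattenBlocks {F : ℕ → R} {f : List ℕ → R} {k : ℕ → R} {L : List (ℕ × List ℕ)}
    (hbound : ∀ b J L', (b, J) :: L' <:+ L → F b = f (innerCounts L'))
    (hinner : ∀ b J L', (b, J) :: L' <:+ L → ∀ v Q, v :: Q <:+ J →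
      F v = k (Q.length + 1 + blockSize (innerCounts L'))) :
    ((flattenBlocks L).map F).sum = blockSum f k (innerCounts L) := by
  induction L with
  | nil => rfl
  | cons b L ih =>
    obtain ⟨b, J⟩ := b
    rw [flattenBlocks, List.map_append, List.sum_append, List.map_cons, List.sum_cons,
      ih (fun _ _ _ hL => hbound _ _ _ (hL.trans (List.suffix_cons _ _)))
        (fun _ _ _ hL => hinner _ _ _ (hL.trans (List.suffix_cons _ _))),
      sum_map_eq_sum_range (H := fun i => k (i + 1 + blockSize (innerCounts L)))
        (hinner b J L List.suffix_rfl), hbound b J L List.suffix_rfl]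
    exact (add_assoc _ _ _).symm

lemma sum_map_cons_flattenBlocks {F k g : ℕ → R} {f : List ℕ → R} {top β : ℕ} {I : List ℕ}
    {L : List (ℕ × List ℕ)} (hfirst : ∀ v Q, v :: Q <:+ top :: I → F v = g Q.length)
    (hbound : ∀ b J L', (b, J) :: L' <:+ L → F b = f (innerCounts L'))
    (hinner : ∀ b J L', (b, J) :: L' <:+ L → ∀ v Q, v :: Q <:+ J →
      F v = k (Q.length + 1 + blockSize (innerCounts L'))) :
    ((top :: flattenBlocks ((β, I) :: L)).map F).sum =
      ∑ i ∈ Finset.range (I.length + 1), g i + F β + blockSum f k (innerCounts L) := by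
  rw [flattenBlocks, ← List.cons_append, List.map_append, List.sum_append,
    sum_map_eq_sum_range hfirst, List.length_cons, List.map_cons, List.sum_cons,
    sum_map_flattenBlocks hbound hinner, add_assoc]

variable {n : ℕ} {σ : Equiv.Perm (Fin n)}

lemma SiteLabel.extensionWeight_eq {G : List ℕ} (h : SiteLabel σ G) (m : ℕ) :
    extensionWeight w m σ = w ^ leftPts σ * siteWeight w m G.length := by
  induction m generalizing n G with
  | zero => rw [extensionWeight, if_pos h.avoids, siteWeight, mul_one]
  | succ m ih =>
    obtain ⟨F, hF, hsum⟩ := h.exists_extensionWeight_succ w m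
    rw [hsum, sum_map_eq_sum_range (H := fun i => w ^ (leftPts σ + 1) * siteWeight w m (i + 1)),
      ← Finset.mul_sum, siteWeight, pow_succ, mul_assoc]
    intro v Q hQ
    obtain ⟨v, rfl⟩ := h.exists_fin_eq (hQ.subset List.mem_cons_self)
    have hv : SiteLabel (_root_.prepend v σ) ((v : ℕ) :: Q) := h.prepend hQ
    rw [hF, ih hv, hv.avoids.leftPts_prepend hv.contains2413, List.length_cons]

section BlockLabel

variable {fresh : Bool} {top β : ℕ} {I : List ℕ} {L : List (ℕ × List ℕ)}

lemma BlockLabel.extensionWeight_prepend_outer (h : BlockLabel σ fresh top β I L)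
    {v : Fin (n + 1)} {b : ℕ} {J Q : List ℕ} {L' : List (ℕ × List ℕ)} (hL : (b, J) :: L' <:+ L)
    (hv : (v : ℕ) :: Q <:+ J) (m : ℕ) :
    extensionWeight w m (_root_.prepend v σ) =
      w * siteWeight w m (Q.length + 1 + blockSize (innerCounts L') + 1) := by
  have hσv : SiteLabel (_root_.prepend v σ) ((v : ℕ) :: flattenBlocks ((b, Q) :: L')) :=
    h.prepend_outer hL hv
  rw [hσv.extensionWeight_eq, hσv.avoids.leftPts_prepend hσv.contains2413,
    h.avoids.leftPts_eq_zero h.avoids2413, List.length_cons, length_flattenBlocks, zero_add,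
    pow_one]
  rfl

lemma BlockLabel.extensionWeight_eq (h : BlockLabel σ fresh top β I L) (m : ℕ) :
    extensionWeight w m σ = blockWeight w m fresh I.length (innerCounts L) := by
  induction m generalizing n fresh top β I L with
  | zero =>
    rw [extensionWeight, if_pos h.avoids, h.avoids.leftPts_eq_zero h.avoids2413, pow_zero,
      blockWeight.eq_1]
  | succ m ih =>
    obtain ⟨F, hF, hsum⟩ := h.exists_extensionWeight_succ w m
    have hlen : ((I ++ if fresh then [β] else []).map Nat.succ).length =
        I.length + fresh.toNat := by
      cases fresh <;> simp
    have hsub : β :: flattenBlocks L <:+ top :: flattenBlocks ((β, I) :: L) :=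
      (List.suffix_append I _).trans (List.suffix_cons _ _)
    have hβ : F β = blockWeight w m fresh (I.length + fresh.toNat) (innerCounts L) := by
      obtain ⟨v, rfl⟩ := h.exists_fin_eq (hsub.subset List.mem_cons_self)
      rw [hF, ih (h.prepend_bound List.suffix_rfl h.fresh_iff), hlen]
    rw [hsum, blockWeight.eq_2, ← hβ]
    refine sum_map_cons_flattenBlocks (fun v Q hQ => ?_) (fun b J L' hL => ?_)
      fun b J L' hL v Q hQ => ?_
    · have hv : v ∈ top :: flattenBlocks ((β, I) :: L) :=
        List.mem_append_left _ (hQ.subset List.mem_cons_self)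
      obtain ⟨v, rfl⟩ := h.exists_fin_eq hv
      rw [hF, ih (h.prepend_inner hQ)]
      rfl
    · have hb : b ∈ flattenBlocks L := fst_mem_flattenBlocks (hL.subset List.mem_cons_self)
      obtain ⟨v, rfl⟩ := h.exists_fin_eq (hsub.subset (List.mem_cons_of_mem _ hb))
      have hv21 : Contains21Above σ v := h.above v (lt_of_suffix h.sorted hsub hb)
      rw [hF, ih (h.prepend_bound (hL.trans (List.suffix_cons _ _)) (iff_of_true hv21 rfl)), hlen]
    · have hv : v ∈ flattenBlocks L := mem_flattenBlocks_of_mem_snd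
        (hL.subset List.mem_cons_self) (hQ.subset List.mem_cons_self)
      obtain ⟨v, rfl⟩ := h.exists_fin_eq (hsub.subset (List.mem_cons_of_mem _ hv))
      rw [hF, h.extensionWeight_prepend_outer w hL hQ]

end BlockLabel

lemma blockLabel_one (σ : Equiv.Perm (Fin 1)) : BlockLabel σ true 1 0 [] [] := by
  have h1 (i j : Fin 1) : ¬ i < j := fun hij => absurd (Subsingleton.elim i j) hij.ne
  have h21 (g : ℕ) : ¬ Contains21Above σ g := fun ⟨i, j, hij, _⟩ => h1 i j hij
  have hactive (g : ℕ) : IsActive σ g :=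
    ⟨fun ⟨i, j, _, hij, _⟩ => h1 i j hij, fun ⟨i, j, _, hij, _⟩ => h1 i j hij⟩
  exact
    { avoids :=
        ⟨fun h => by obtain ⟨i, j, _, _, hij, _⟩ := patternContains_p4213_iff.1 h; exact h1 i j hij,
          fun h => by
            obtain ⟨i, j, _, _, hij, _⟩ := patternContains_p2143_iff.1 h
            exact h1 i j hij⟩
      sorted := by simp [flattenBlocks]
      le := by simp [flattenBlocks]
      isActive_iff := fun g hg => iff_of_true (hactive g) (by simp [flattenBlocks]; omega)
      avoids2413 := fun ⟨i, j, _, _, hij, _⟩ => h1 i j hij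
      top_above := h21 1
      inner := by simp
      outer := by simp
      bound := fun _ _ => ⟨fun ⟨i, j, hij, _⟩ => h1 i j hij, fun ⟨i, j, _, hij, _⟩ => h1 i j hij⟩
      fresh_iff := iff_of_false (h21 0) (by simp)
      above := by simp }

open scoped Classical in
theorem sum_pow_leftPts (n : ℕ) :
    (∑ σ : Equiv.Perm (Fin (n + 1)), if AvoidsD σ then w ^ leftPts σ else 0) =
      blockWeight w n true 0 [] := by
  have h := sum_extensionWeight w n 1
  rw [Fintype.sum_unique, (blockLabel_one _).extensionWeight_eq, add_comm 1 n] at h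
  exact h.symm

end Weights

/-! ### Solving the recurrence -/

section Solution

variable {A : Type*} [CommRing A]

/-- The sum of `p ^ d * f T`, where `T` runs over the proper tails of a list and `d` is the number
of entries dropped. -/
def tailSum (p : A) (f : List ℕ → A) : List ℕ → A
  | [] => 0
  | _ :: L => p * (f L + tailSum p f L)

lemma tailSum_combination (p a b c : A) (f g k : List ℕ → A) (L : List ℕ) :
    tailSum p (fun L => a * f L + b * g L + c * k L) L =
      a * tailSum p f L + b * tailSum p g L + c * tailSum p k L := by
  induction L with
  | nil => simp only [tailSum, mul_zero, add_zero]
  | cons _ L ih =>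
    simp only [tailSum, ih]
    ring

/-- The geometric sum `y + y ^ 2 + ⋯ + y ^ (e + 1)`. -/
def geomSum (y : A) (e : ℕ) : A := ∑ i ∈ Finset.range (e + 1), y ^ (i + 1)

lemma geomSum_zero (y : A) : geomSum y 0 = y := by
  rw [geomSum, zero_add, Finset.sum_range_one, zero_add, pow_one]

lemma geomSum_succ (y : A) (e : ℕ) : geomSum y (e + 1) = y + y * geomSum y e := by
  rw [geomSum, Finset.sum_range_succ', geomSum, Finset.mul_sum, zero_add, pow_one, add_comm]
  simp only [pow_succ']

/-- Elements in which the generating functions of `blockWeight` are polynomial, where `z` marks the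
number of prepended entries and `u = z * w`: the algebraic one is `q`, while `V` inverts the main
denominator and the others invert simple factors. -/
structure KernelSolution (z u : A) where
  (p q h y r V : A)
  p_mul : p * (1 - z) = 1
  q_eq : q = 1 + z * p * q ^ 2
  h_mul : h * (1 - z * q) = 1
  y_mul : y * (1 - u) = 1
  r_mul : r * (1 - z * y) = 1
  V_mul : ((1 - u - z * p * q) * (1 - u - z) - u * (z * p) * z * q * h) * V = 1

namespace KernelSolution

variable {z u : A} (S : KernelSolution z u)

/-- The `w`-dependent part of the solution: `S.h + z * S.G` is the generating function of
`w ^ leftPts σ` over the permutations `σ` avoiding 4213 and 2143. -/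
def G : A := u * (z * S.p) * z * S.q ^ 2 * S.h ^ 2 * S.V

/-- One plus the contribution of the sites that create a 2413. -/
def outerPart : List ℕ → A
  | [] => 1
  | c :: L => outerPart L + (S.y ^ (c + 1) - S.y) * S.y ^ blockSize L

/-- The part of the solution that is multiplied by `q` whenever a block is added. -/
def catalanPart : List ℕ → A
  | [] => S.h * (S.q - 1) + S.G * (1 - z * S.y)
  | c :: L => S.h * (S.q - 1) * S.outerPart (c :: L)
      + S.G * (1 - z * S.y) * S.y ^ blockSize (c :: L) + S.q * catalanPart L

/-- The part of `S.solTrue 0 (c :: L)` that does not depend on `c`. -/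
def consPart (L : List ℕ) : A :=
  S.h * S.q * S.outerPart L - S.h * S.q * S.y * S.y ^ blockSize L + S.q * S.catalanPart L

/-- The inhomogeneous term of the recurrence. -/
def forcing (e : ℕ) (L : List ℕ) : A :=
  S.outerPart L + z * (e + 1) * S.consPart L
    + z * geomSum S.y e * (S.h * S.q + S.G) * S.y ^ blockSize L

/-- The generating function of `blockWeight m false e L`. -/
def solFalse (e : ℕ) (L : List ℕ) : A :=
  S.p * (S.forcing e L + z * tailSum S.p (S.forcing e) L)

/-- The generating function of `blockWeight m true e L`. -/
def solTrue (e : ℕ) (L : List ℕ) : A :=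
  S.p * S.outerPart L + z * (S.p * (e + 1) + z * S.p ^ 2) * S.consPart L
    + z * (S.h * S.q + S.G) * (S.r * geomSum S.y e + z * S.y * S.r * S.p) * S.y ^ blockSize L
    + z * (S.p * tailSum S.p S.outerPart L
      + z * (S.p * (e + 2) + z * S.p ^ 2) * tailSum S.p S.consPart L
      + z * (S.h * S.q + S.G) * (S.r * geomSum S.y (e + 1) + z * S.y * S.r * S.p)
        * tailSum S.p (fun L => S.y ^ blockSize L) L)

/-- The generating function of `blockWeight m fresh e L`. -/
def sol : Bool → ℕ → List ℕ → A
  | true => S.solTrue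
  | false => S.solFalse

lemma tailSum_forcing (e : ℕ) (L : List ℕ) :
    tailSum S.p (S.forcing e) L = tailSum S.p S.outerPart L
      + z * (e + 1) * tailSum S.p S.consPart L
      + z * geomSum S.y e * (S.h * S.q + S.G) * tailSum S.p (fun L => S.y ^ blockSize L) L := by
  have h := tailSum_combination S.p 1 (z * (e + 1)) (z * geomSum S.y e * (S.h * S.q + S.G))
    S.outerPart S.consPart (fun L => S.y ^ blockSize L) L
  simp only [one_mul] at h
  exact h

lemma solTrue_eq_forcing_add (e : ℕ) (L : List ℕ) :
    S.solTrue e L = S.forcing e L + z * S.solTrue (e + 1) L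
      + z * tailSum S.p (S.forcing (e + 1)) L := by
  rw [tailSum_forcing]
  simp only [solTrue, forcing, geomSum_succ S.y (e + 1), geomSum_succ S.y e]
  push_cast
  generalize S.outerPart L = a
  generalize S.consPart L = b
  generalize S.y ^ blockSize L = c
  generalize tailSum S.p S.outerPart L = ta
  generalize tailSum S.p S.consPart L = tb
  generalize tailSum S.p (fun L => S.y ^ blockSize L) L = tc
  generalize geomSum S.y e = g
  generalize (e : A) = e
  linear_combination
    (a + z * ta + z * b * (e + 1) + z * z * S.p * b + z ^ 2 * tb * (e + 2) + z ^ 3 * tb * S.p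
      + z ^ 2 * (S.h * S.q + S.G) * S.y * S.r * c
      + z ^ 3 * (S.h * S.q + S.G) * S.y * S.r * tc) * S.p_mul
    + (z * (S.h * S.q + S.G) * g * c
      + z ^ 2 * (S.h * S.q + S.G) * (S.y + S.y * g) * tc) * S.r_mul

lemma nil_identity :
    S.h - S.p - z * S.p ^ 2 * S.h * S.q
      + (S.G * z * S.y - z * (S.h * S.q + S.G) * S.r * S.y * S.p
        + z * S.p ^ 2 * S.h * S.q * S.y)
      + (1 - z * S.p ^ 2 * S.q) * (S.h * (S.q - 1) + S.G * (1 - z * S.y)) = 0 := by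
  obtain ⟨p, q, h, y, r, V, hp, hq, hh, hy, hr, hV⟩ := S
  -- Clearing the denominator `V` leaves an identity that holds for every `u`.
  have hclear : (h - p - z * p ^ 2 * h * q - z * (h * q) * r * y * p + z * p ^ 2 * h * q * y
        + (1 - z * p ^ 2 * q) * (h * (q - 1)))
      * ((1 - u - z * p * q) * (1 - u - z) - u * (z * p) * z * q * h)
      + (z * y - z * r * y * p + (1 - z * p ^ 2 * q) * (1 - z * y))
        * (u * (z * p) * z * q ^ 2 * h ^ 2) = 0 := by
    clear hV
    grind
  simp only [G]
  linear_combination V * hclear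
    - (h - p - z * p ^ 2 * h * q - z * (h * q) * r * y * p + z * p ^ 2 * h * q * y
      + (1 - z * p ^ 2 * q) * (h * (q - 1))) * hV

lemma cons_identity :
    z ^ 2 * (S.h * S.q + S.G) * (S.r * S.y ^ 2 + S.r * S.y * S.p)
      - z ^ 2 * S.p * (1 + S.p) * S.h * S.q * S.y
      + (S.G * z * S.y - z * (S.h * S.q + S.G) * S.r * S.y * S.p
        + z * S.p ^ 2 * S.h * S.q * S.y)
      + S.y * (z * S.p + z ^ 2 * S.p * (1 + S.p) * S.h * S.q
        + (S.h - S.p - z * S.p ^ 2 * S.h * S.q)) = 0 := by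
  obtain ⟨p, q, h, y, r, V, hp, hq, hh, hy, hr, hV⟩ := S
  have hclear : (z ^ 2 * (h * q) * (r * y ^ 2 + r * y * p) - z ^ 2 * p * (1 + p) * h * q * y
        - z * (h * q) * r * y * p + z * p ^ 2 * h * q * y
        + y * (z * p + z ^ 2 * p * (1 + p) * h * q + h - p - z * p ^ 2 * h * q))
      * ((1 - u - z * p * q) * (1 - u - z) - u * (z * p) * z * q * h)
      + (z ^ 2 * (r * y ^ 2 + r * y * p) + z * y - z * r * y * p)
        * (u * (z * p) * z * q ^ 2 * h ^ 2) = 0 := by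
    clear hV
    grind
  simp only [G]
  linear_combination V * hclear
    - (z ^ 2 * (h * q) * (r * y ^ 2 + r * y * p) - z ^ 2 * p * (1 + p) * h * q * y
      - z * (h * q) * r * y * p + z * p ^ 2 * h * q * y
      + y * (z * p + z ^ 2 * p * (1 + p) * h * q + h - p - z * p ^ 2 * h * q)) * hV

lemma tailSum_eq (L : List ℕ) :
    z * S.p * tailSum S.p S.outerPart L + z ^ 2 * S.p * (1 + S.p) * tailSum S.p S.consPart L
      + z ^ 2 * (S.h * S.q + S.G) * (S.r * S.y ^ 2 + S.r * S.y * S.p)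
        * tailSum S.p (fun L => S.y ^ blockSize L) L
    = (S.h - S.p - z * S.p ^ 2 * S.h * S.q) * S.outerPart L
      + (S.G * z * S.y - z * (S.h * S.q + S.G) * S.r * S.y * S.p
        + z * S.p ^ 2 * S.h * S.q * S.y) * S.y ^ blockSize L
      + (1 - z * S.p ^ 2 * S.q) * S.catalanPart L := by
  have houter : (S.h - S.p - z * S.p ^ 2 * S.h * S.q)
        + (1 - z * S.p ^ 2 * S.q) * (S.h * (S.q - 1)) =
      S.p * (z * S.p + z ^ 2 * S.p * (1 + S.p) * S.h * S.q
        + (S.h - S.p - z * S.p ^ 2 * S.h * S.q)) := by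
    have hp := S.p_mul
    have hq := S.q_eq
    have hh := S.h_mul
    grind
  have hcatalan : (1 - z * S.p ^ 2 * S.q) * S.q =
      S.p * (z ^ 2 * S.p * (1 + S.p) * S.q + (1 - z * S.p ^ 2 * S.q)) := by
    have hp := S.p_mul
    have hq := S.q_eq
    grind
  induction L with
  | nil =>
    simp only [tailSum, outerPart, catalanPart, blockSize, pow_zero]
    linear_combination - S.nil_identity
  | cons c L ih =>
    simp only [tailSum, catalanPart]
    simp only [outerPart, blockSize, consPart, pow_add _ (c + 1)] at ih ⊢
    linear_combination S.p * ih - houter * (S.outerPart L)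
      - S.y ^ (c + 1) * S.y ^ blockSize L * S.nil_identity
      + S.p * S.y ^ blockSize L * S.cons_identity + S.y ^ blockSize L * S.y * houter
      - hcatalan * S.catalanPart L

lemma solTrue_zero (L : List ℕ) :
    S.solTrue 0 L =
      S.h * S.outerPart L + S.G * z * S.y * S.y ^ blockSize L + S.catalanPart L := by
  have hcons : S.consPart L = S.h * S.q * S.outerPart L - S.h * S.q * S.y * S.y ^ blockSize L
    + S.q * S.catalanPart L := rfl
  simp only [solTrue, geomSum_succ, geomSum_zero, Nat.cast_zero]
  linear_combination S.tailSum_eq L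
    - (z * S.p * S.consPart L + z * (S.h * S.q + S.G) * S.r * S.y * S.y ^ blockSize L
      + z ^ 2 * S.p * tailSum S.p S.consPart L
      + z ^ 2 * (S.h * S.q + S.G) * S.r * S.y * tailSum S.p (fun L => S.y ^ blockSize L) L)
        * S.p_mul
    + z * S.p ^ 2 * hcons

lemma solTrue_zero_cons (c : ℕ) (L : List ℕ) :
    S.solTrue 0 (c :: L) =
      S.consPart L + (S.h * S.q + S.G) * S.y ^ (c + 1) * S.y ^ blockSize L := by
  rw [solTrue_zero, catalanPart, outerPart, consPart, blockSize, pow_add _ (c + 1)]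
  ring

lemma forcing_eq (e : ℕ) (L : List ℕ) :
    S.forcing e L = S.outerPart L + z * ∑ i ∈ Finset.range (e + 1), S.solTrue 0 (i :: L) := by
  simp only [solTrue_zero_cons, Finset.sum_add_distrib, ← Finset.sum_mul, ← Finset.mul_sum,
    Finset.sum_const, Finset.card_range, nsmul_eq_mul, forcing, geomSum]
  push_cast
  ring

lemma mul_sum_y_pow (c s : ℕ) :
    u * ∑ i ∈ Finset.range c, S.y ^ (i + 1 + s + 1) = (S.y ^ (c + 1) - S.y) * S.y ^ s := by
  induction c with
  | zero => simp
  | succ c ih =>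
    rw [Finset.sum_range_succ, mul_add, ih]
    linear_combination (- S.y ^ (c + 1) * S.y ^ s) * S.y_mul

end KernelSolution

namespace KernelSolution

variable {z w : A} (S : KernelSolution z (z * w))

lemma mul_blockSum_solFalse (e : ℕ) (L : List ℕ) :
    z * blockSum (S.solFalse e) (fun s => w * S.y ^ (s + 1)) L =
      S.outerPart L - 1 + z * tailSum S.p (S.forcing e) L := by
  induction L with
  | nil => simp [blockSum, outerPart, tailSum]
  | cons c L ih =>
    rw [blockSum, outerPart, tailSum, mul_add, ih, ← Finset.mul_sum, solFalse]
    linear_combination S.mul_sum_y_pow c (blockSize L)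
      - z * tailSum S.p (S.forcing e) L * S.p_mul

lemma sol_recurrence (fresh : Bool) (e : ℕ) (L : List ℕ) :
    S.sol fresh e L = 1 + z *
      (∑ i ∈ Finset.range (e + 1), S.sol true 0 (i :: L) + S.sol fresh (e + fresh.toNat) L
        + blockSum (S.sol false (e + fresh.toNat)) (fun s => w * S.y ^ (s + 1)) L) := by
  cases fresh
  · have hsol : S.solFalse e L =
      S.p * (S.forcing e L + z * tailSum S.p (S.forcing e) L) := rfl
    simp only [sol, Bool.toNat_false, add_zero]
    linear_combination - S.mul_blockSum_solFalse e L + S.forcing_eq e L + (1 - z) * hsol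
      + (S.forcing e L + z * tailSum S.p (S.forcing e) L) * S.p_mul
  · simp only [sol, Bool.toNat_true]
    linear_combination - S.mul_blockSum_solFalse (e + 1) L + S.forcing_eq e L
      + S.solTrue_eq_forcing_add e L

lemma one_add_mul_sol_nil : 1 + z * S.sol true 0 [] = S.h + z * S.G := by
  rw [sol, solTrue_zero, outerPart, catalanPart, blockSize, pow_zero]
  linear_combination - S.h_mul

end KernelSolution

end Solution

section Series

variable {R : Type*} [CommRing R] {w : R}

lemma coeff_pow_eq_siteWeight {y : R⟦X⟧} (hy : y * (1 - X * C w) = 1) (m s : ℕ) :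
    coeff m (y ^ s) = siteWeight w m s := by
  have hpow (s : ℕ) : y ^ s = 1 + X * (C w * ∑ i ∈ Finset.range s, y ^ (i + 1)) := by
    induction s with
    | zero => simp
    | succ s ih =>
      rw [Finset.sum_range_succ]
      linear_combination ih + y ^ s * hy
  induction m generalizing s with
  | zero => simp [hpow s, siteWeight]
  | succ m ih =>
    rw [hpow, map_add, coeff_succ_X_mul, coeff_C_mul, map_sum, siteWeight, coeff_one,
      if_neg m.succ_ne_zero, zero_add]
    simp only [ih]

lemma coeff_blockSum (m : ℕ) (f : List ℕ → R⟦X⟧) (k : ℕ → R⟦X⟧) (L : List ℕ) :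
    coeff m (blockSum f k L) = blockSum (fun L => coeff m (f L)) (fun s => coeff m (k s)) L := by
  induction L with
  | nil => rfl
  | cons c L ih => simp only [blockSum, map_add, map_sum, ih]

lemma KernelSolution.coeff_sol (S : KernelSolution (X : R⟦X⟧) (X * C w)) (m : ℕ) (fresh : Bool)
    (e : ℕ) (L : List ℕ) : coeff m (S.sol fresh e L) = blockWeight w m fresh e L := by
  induction m generalizing fresh e L with
  | zero => simp [S.sol_recurrence fresh e L, blockWeight]
  | succ m ih =>
    rw [S.sol_recurrence, map_add, coeff_succ_X_mul, map_add, map_add, map_sum, coeff_blockSum,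
      blockWeight, coeff_one, if_neg m.succ_ne_zero, zero_add]
    simp only [ih, coeff_C_mul, coeff_pow_eq_siteWeight S.y_mul]

end Series

/-! ### Coefficient asymptotics of order `n ^ (-3/2)` -/

section Asymptotics

/-- `n ^ (3/2)`, the inverse of the growth rate of the coefficients of a power series with a
square-root singularity at `1`. -/
noncomputable def threeHalvesPow (n : ℕ) : ℝ := n * √n

lemma threeHalvesPow_nonneg (n : ℕ) : 0 ≤ threeHalvesPow n := by
  unfold threeHalvesPow; positivity

lemma threeHalvesPow_pos {n : ℕ} (hn : 0 < n) : 0 < threeHalvesPow n := by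
  unfold threeHalvesPow; positivity

lemma threeHalvesPow_le_of_le_mul {b : ℝ} (hb : 0 ≤ b) {m n : ℕ} (h : (n : ℝ) ≤ b * m) :
    threeHalvesPow n ≤ b * √b * threeHalvesPow m := by
  have hsqrt : √(n : ℝ) ≤ √b * √(m : ℝ) := by
    rw [← Real.sqrt_mul hb]
    exact Real.sqrt_le_sqrt h
  calc threeHalvesPow n ≤ (b * m) * (√b * √(m : ℝ)) := by unfold threeHalvesPow; gcongr
    _ = b * √b * threeHalvesPow m := by unfold threeHalvesPow; ring

lemma threeHalvesPow_le_of_two_mul_le {i n : ℕ} (h : 2 * i ≤ n) :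
    threeHalvesPow n ≤ 8 * threeHalvesPow (n - i) := by
  have hn : (n : ℝ) ≤ 4 * ((n - i : ℕ) : ℝ) := by norm_cast; omega
  have hsqrt : √(4 : ℝ) = 2 := by rw [show (4 : ℝ) = 2 ^ 2 by norm_num]; simp
  calc threeHalvesPow n ≤ 4 * √4 * threeHalvesPow (n - i) :=
        threeHalvesPow_le_of_le_mul (by norm_num) hn
    _ = 8 * threeHalvesPow (n - i) := by rw [hsqrt]; ring

-- With `1 / b + 1 / d = 1`, one of `i + j ≤ b * j` and `i + j ≤ d * i` holds.
lemma exists_threeHalvesPow_add_le {c : ℝ} (hc : 1 < c) :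
    ∃ D, 0 ≤ D ∧ ∀ i j, threeHalvesPow (i + j) ≤ c * threeHalvesPow j + D * threeHalvesPow i := by
  set b := √c
  have hb : 1 < b := Real.lt_sqrt_of_sq_lt (by linarith)
  have hb1 : 0 < b - 1 := by linarith
  have hbc : b * √b ≤ c := calc
    b * √b ≤ b * b := by gcongr; exact Real.sqrt_le_self_iff.2 (.inr hb.le)
    _ = c := Real.mul_self_sqrt (by linarith)
  set d := b / (b - 1)
  have hd : 0 ≤ d := by positivity
  refine ⟨d * √d, by positivity, fun i j => ?_⟩
  have hi := threeHalvesPow_nonneg i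
  have hj := threeHalvesPow_nonneg j
  rcases le_or_gt ((i + j : ℕ) : ℝ) (b * j) with hcase | hcase
  · calc threeHalvesPow (i + j) ≤ b * √b * threeHalvesPow j :=
          threeHalvesPow_le_of_le_mul (by linarith) hcase
      _ ≤ c * threeHalvesPow j := by gcongr
      _ ≤ c * threeHalvesPow j + d * √d * threeHalvesPow i := le_add_of_nonneg_right (by positivity)
  · have hle : ((i + j : ℕ) : ℝ) ≤ d * i := by
      rw [div_mul_eq_mul_div, le_div_iff₀ hb1]
      push_cast at hcase ⊢
      linarith
    calc threeHalvesPow (i + j) ≤ d * √d * threeHalvesPow i := threeHalvesPow_le_of_le_mul hd hle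
      _ ≤ c * threeHalvesPow j + d * √d * threeHalvesPow i := le_add_of_nonneg_left (by positivity)

lemma tendsto_threeHalvesPow_mul_shift {g : ℕ → ℝ} {l : ℝ}
    (hg : Tendsto (fun n => threeHalvesPow n * g n) atTop (𝓝 l)) (i : ℕ) :
    Tendsto (fun n => threeHalvesPow n * g (n - i)) atTop (𝓝 l) := by
  rw [← tendsto_add_atTop_iff_nat i]
  have hratio : Tendsto (fun k : ℕ => 1 + (i : ℝ) / k) atTop (𝓝 1) := by
    simpa using (tendsto_const_div_atTop_nhds_zero_nat (i : ℝ)).const_add 1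
  have hlim : Tendsto
      (fun k : ℕ => (1 + (i : ℝ) / k) * √(1 + (i : ℝ) / k) * (threeHalvesPow k * g k))
      atTop (𝓝 l) := by
    simpa using (hratio.mul hratio.sqrt).mul hg
  refine hlim.congr' ?_
  filter_upwards [eventually_gt_atTop 0] with k hk
  have hsqrt : √(k : ℝ) ≠ 0 := by positivity
  rw [show 1 + (i : ℝ) / k = ((k + i : ℕ) : ℝ) / k by push_cast; field_simp,
    Real.sqrt_div (by positivity), Nat.add_sub_cancel]
  unfold threeHalvesPow
  field_simp

lemma abs_threeHalvesPow_mul_shift_le {g : ℕ → ℝ} {C : ℝ}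
    (hC : ∀ n, |threeHalvesPow n * g n| ≤ C) {n i : ℕ} (hi : 2 * i ≤ n) :
    |threeHalvesPow n * g (n - i)| ≤ 8 * C := by
  rw [abs_mul, abs_of_nonneg (threeHalvesPow_nonneg n)]
  calc threeHalvesPow n * |g (n - i)| ≤ 8 * threeHalvesPow (n - i) * |g (n - i)| := by
        gcongr; exact threeHalvesPow_le_of_two_mul_le hi
    _ = 8 * |threeHalvesPow (n - i) * g (n - i)| := by
        rw [abs_mul, abs_of_nonneg (threeHalvesPow_nonneg _)]; ring
    _ ≤ 8 * C := by gcongr; exact hC _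

section HalfSums

variable {f g : ℕ → ℝ} {m : ℕ → ℕ}

lemma tendsto_sum_range_of_dominated (hf : Summable f) (hm : Tendsto m atTop atTop)
    {c : ℕ → ℕ → ℝ} {d : ℕ → ℝ} {B : ℝ} (hc : ∀ n i, i < m n → |c n i| ≤ B)
    (hd : ∀ i, Tendsto (fun n => c n i) atTop (𝓝 (d i))) :
    Tendsto (fun n => ∑ i ∈ Finset.range (m n), f i * c n i) atTop (𝓝 (∑' i, f i * d i)) := by
  have hlim : Tendsto (fun n => ∑' i, if i < m n then f i * c n i else 0) atTop
      (𝓝 (∑' i, f i * d i)) := by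
    refine tendsto_tsum_of_dominated_convergence (bound := fun i => |f i| * |B|)
      (hf.abs.mul_right _) (fun i => ?_) (.of_forall fun n i => ?_)
    · refine ((hd i).const_mul (f i)).congr' ?_
      filter_upwards [hm.eventually_gt_atTop i] with n hn
      rw [if_pos hn]
    · split_ifs with h
      · rw [Real.norm_eq_abs, abs_mul]
        exact mul_le_mul_of_nonneg_left ((hc n i h).trans (le_abs_self B)) (abs_nonneg _)
      · rw [norm_zero]; positivity
  refine hlim.congr fun n => ?_
  rw [tsum_eq_sum (s := Finset.range (m n)) fun i hi => if_neg (Finset.mem_range.not.1 hi)]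
  exact Finset.sum_congr rfl fun i hi => if_pos (Finset.mem_range.1 hi)

lemma tendsto_sum_mul_shift (hf : Summable f) (hm : Tendsto m atTop atTop)
    (hmn : ∀ n, 2 * m n ≤ n + 2) {l : ℝ}
    (hg : Tendsto (fun n => threeHalvesPow n * g n) atTop (𝓝 l)) :
    Tendsto (fun n => ∑ i ∈ Finset.range (m n), f i * (threeHalvesPow n * g (n - i))) atTop
      (𝓝 ((∑' i, f i) * l)) := by
  obtain ⟨C, hC⟩ := (Metric.isBounded_range_of_tendsto _ hg).exists_norm_le
  rw [← tsum_mul_right]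
  refine tendsto_sum_range_of_dominated hf hm (B := 8 * C) (fun n i hi => ?_)
    (tendsto_threeHalvesPow_mul_shift hg)
  have := hmn n
  exact abs_threeHalvesPow_mul_shift_le (fun n => hC _ ⟨n, rfl⟩) (by omega)

lemma tendsto_sum_mul_shift_mul_div (hf : Summable f) (hm : Tendsto m atTop atTop)
    (hmn : ∀ n, 2 * m n ≤ n + 2) {C : ℝ} (hC : ∀ n, |threeHalvesPow n * g n| ≤ C) :
    Tendsto (fun n => ∑ i ∈ Finset.range (m n), f i * (threeHalvesPow n * g (n - i) * (i / n)))
      atTop (𝓝 0) := by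
  have hC0 : 0 ≤ C := (abs_nonneg _).trans (hC 0)
  have hbound : ∀ n i : ℕ, 2 * i ≤ n →
      |threeHalvesPow n * g (n - i) * (i / n)| ≤ 8 * C * ((i : ℝ) / n) := fun n i hi => by
    rw [abs_mul, abs_of_nonneg (a := (i : ℝ) / n) (by positivity)]
    exact mul_le_mul_of_nonneg_right (abs_threeHalvesPow_mul_shift_le hC hi) (by positivity)
  have h := tendsto_sum_range_of_dominated hf hm (d := fun _ => 0) (B := 8 * C)
    (c := fun n i => threeHalvesPow n * g (n - i) * (i / n)) (fun n i hi => ?_) fun i => ?_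
  · simpa only [mul_zero, tsum_zero] using h
  · have hin : 2 * i ≤ n := by have := hmn n; omega
    refine (hbound n i hin).trans (mul_le_of_le_one_right (by positivity) ?_)
    exact div_le_one_of_le₀ (by norm_cast; omega) (by positivity)
  · refine squeeze_zero_norm' (a := fun n : ℕ => 8 * C * ((i : ℝ) / n)) ?_ ?_
    · filter_upwards [eventually_ge_atTop (2 * i)] with n hn using hbound n i hn
    · simpa using (tendsto_const_div_atTop_nhds_zero_nat (i : ℝ)).const_mul (8 * C)

lemma abs_sum_mul_shift_le (hf : Summable f) {C : ℝ} (hC : ∀ n, |threeHalvesPow n * g n| ≤ C)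
    {n k : ℕ} (hk : 2 * k ≤ n + 2) :
    |threeHalvesPow n * ∑ i ∈ Finset.range k, f i * g (n - i)| ≤ 8 * C * ∑' i, |f i| := by
  have hC0 : 0 ≤ C := (abs_nonneg _).trans (hC 0)
  rw [Finset.mul_sum]
  calc |∑ i ∈ Finset.range k, threeHalvesPow n * (f i * g (n - i))|
      ≤ ∑ i ∈ Finset.range k, |threeHalvesPow n * (f i * g (n - i))| :=
        Finset.abs_sum_le_sum_abs _ _
    _ ≤ ∑ i ∈ Finset.range k, 8 * C * |f i| := by
        refine Finset.sum_le_sum fun i hi => ?_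
        have hi' := Finset.mem_range.1 hi
        rw [mul_left_comm, abs_mul, mul_comm (8 * C)]
        exact mul_le_mul_of_nonneg_left (abs_threeHalvesPow_mul_shift_le hC (by omega))
          (abs_nonneg _)
    _ = 8 * C * ∑ i ∈ Finset.range k, |f i| := by rw [Finset.mul_sum]
    _ ≤ 8 * C * ∑' i, |f i| := by
        gcongr
        exact hf.abs.sum_le_tsum _ fun _ _ => abs_nonneg _

end HalfSums

lemma tendsto_div_two_add_one_atTop : Tendsto (fun n : ℕ => n / 2 + 1) atTop atTop :=
  tendsto_atTop_atTop.2 fun b => ⟨2 * b, fun n hn => by omega⟩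

lemma tendsto_add_one_div_two_atTop : Tendsto (fun n : ℕ => (n + 1) / 2) atTop atTop :=
  tendsto_atTop_atTop.2 fun b => ⟨2 * b, fun n hn => by omega⟩

lemma coeff_mul_eq_sum_half_add_sum_half {R : Type*} [CommSemiring R] (F G : R⟦X⟧) (n : ℕ) :
    coeff n (F * G) = ∑ i ∈ Finset.range (n / 2 + 1), coeff i F * coeff (n - i) G
      + ∑ i ∈ Finset.range ((n + 1) / 2), coeff i G * coeff (n - i) F := by
  rw [coeff_mul, Finset.Nat.sum_antidiagonal_eq_sum_range_succ
    (fun i j => coeff i F * coeff j G),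
    ← Finset.sum_range_add_sum_Ico _ (show n / 2 + 1 ≤ n.succ by omega)]
  congr 1
  refine Finset.sum_bij' (fun i _ => n - i) (fun i _ => n - i) ?_ ?_ ?_ ?_ ?_ <;>
    intro i hi <;> simp only [Finset.mem_range, Finset.mem_Ico] at hi ⊢
  any_goals omega
  rw [Nat.sub_sub_self (by omega), mul_comm]

/-- The coefficients of `F` behave as for a square-root singularity at `1`: they sum to `s`, and
`n ^ (3/2)` times the `n`-th one tends to `l`. The value `l = 0` allows series that are more
regular at `1`. -/
structure HasSqrtSingularity (F : ℝ⟦X⟧) (s l : ℝ) : Prop where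
  hasSum : HasSum (fun n => coeff n F) s
  tendsto : Tendsto (fun n => threeHalvesPow n * coeff n F) atTop (𝓝 l)

/-- The coefficients of `F` are `O(n ^ (-3/2))`. -/
def HasThreeHalvesBound (F : ℝ⟦X⟧) : Prop := ∃ C, ∀ n, |threeHalvesPow n * coeff n F| ≤ C

/-- All coefficients of `F` are nonnegative. -/
def NonnegCoeff (F : ℝ⟦X⟧) : Prop := ∀ n, 0 ≤ coeff n F

lemma hasSum_coeff_mul {F G : ℝ⟦X⟧} {s t : ℝ} (hF : HasSum (fun n => coeff n F) s)
    (hG : HasSum (fun n => coeff n G) t) : HasSum (fun n => coeff n (F * G)) (s * t) := by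
  have hprod := tsum_mul_tsum_eq_tsum_sum_antidiagonal_of_summable_norm
    hF.summable.norm hG.summable.norm
  rw [hF.tsum_eq, hG.tsum_eq] at hprod
  simp only [coeff_mul]
  rw [hprod]
  exact (summable_norm_sum_mul_antidiagonal_of_summable_norm
    hF.summable.norm hG.summable.norm).of_norm.hasSum

lemma HasThreeHalvesBound.mul {F G : ℝ⟦X⟧} (hF : HasThreeHalvesBound F) (hG : HasThreeHalvesBound G)
    (sF : Summable fun n => coeff n F) (sG : Summable fun n => coeff n G) :
    HasThreeHalvesBound (F * G) := by
  obtain ⟨C, hC⟩ := hF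
  obtain ⟨D, hD⟩ := hG
  refine ⟨8 * D * ∑' i, |coeff i F| + 8 * C * ∑' i, |coeff i G|, fun n => ?_⟩
  rw [coeff_mul_eq_sum_half_add_sum_half, mul_add]
  exact (abs_add_le _ _).trans (add_le_add (abs_sum_mul_shift_le sF hD (by omega))
    (abs_sum_mul_shift_le sG hC (by omega)))

namespace HasSqrtSingularity

variable {F G : ℝ⟦X⟧} {s t k l : ℝ}

lemma hasThreeHalvesBound (h : HasSqrtSingularity F s l) : HasThreeHalvesBound F := by
  obtain ⟨C, hC⟩ := (Metric.isBounded_range_of_tendsto _ h.tendsto).exists_norm_le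
  exact ⟨C, fun n => hC _ ⟨n, rfl⟩⟩

lemma mul (hF : HasSqrtSingularity F s l) (hG : HasSqrtSingularity G t k) :
    HasSqrtSingularity (F * G) (s * t) (s * k + t * l) := by
  refine ⟨hasSum_coeff_mul hF.hasSum hG.hasSum, ?_⟩
  have hsmallF := tendsto_sum_mul_shift hF.hasSum.summable tendsto_div_two_add_one_atTop
    (fun n => by omega) hG.tendsto
  have hsmallG := tendsto_sum_mul_shift hG.hasSum.summable tendsto_add_one_div_two_atTop
    (fun n => by omega) hF.tendsto
  rw [hF.hasSum.tsum_eq] at hsmallF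
  rw [hG.hasSum.tsum_eq] at hsmallG
  refine (hsmallF.add hsmallG).congr fun n => ?_
  rw [coeff_mul_eq_sum_half_add_sum_half, mul_add, Finset.mul_sum, Finset.mul_sum]
  congr 1 <;> exact Finset.sum_congr rfl fun i _ => mul_left_comm _ _ _

lemma add (hF : HasSqrtSingularity F s l) (hG : HasSqrtSingularity G t k) :
    HasSqrtSingularity (F + G) (s + t) (l + k) := by
  refine ⟨by simpa using hF.hasSum.add hG.hasSum, ?_⟩
  simpa [mul_add] using hF.tendsto.add hG.tendsto

lemma neg (hF : HasSqrtSingularity F s l) : HasSqrtSingularity (-F) (-s) (-l) := by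
  refine ⟨by simpa using hF.hasSum.neg, ?_⟩
  simpa using hF.tendsto.neg

lemma sub (hF : HasSqrtSingularity F s l) (hG : HasSqrtSingularity G t k) :
    HasSqrtSingularity (F - G) (s - t) (l - k) := by
  simpa [sub_eq_add_neg] using hF.add hG.neg

lemma congr (hF : HasSqrtSingularity F s l) (hs : s = t) (hl : l = k) :
    HasSqrtSingularity F t k := hs ▸ hl ▸ hF

end HasSqrtSingularity

namespace NonnegCoeff

lemma mul {F G : ℝ⟦X⟧} (hF : NonnegCoeff F) (hG : NonnegCoeff G) : NonnegCoeff (F * G) :=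
  fun n => by
    rw [coeff_mul]
    exact Finset.sum_nonneg fun i _ => mul_nonneg (hF _) (hG _)

lemma add {F G : ℝ⟦X⟧} (hF : NonnegCoeff F) (hG : NonnegCoeff G) : NonnegCoeff (F + G) :=
  fun n => by
    rw [map_add]
    exact add_nonneg (hF n) (hG n)

end NonnegCoeff

section Inverse

open Finset.HasAntidiagonal (antidiagonal mem_antidiagonal)

variable {U V W : ℝ⟦X⟧} {l u v ω : ℝ}

lemma coeff_one_add_mul_nonneg (hW : NonnegCoeff W) (hW0 : coeff 0 W = 0) {n : ℕ}
    (hV : ∀ j < n, 0 ≤ coeff j V) : 0 ≤ coeff n (1 + W * V) := by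
  rw [map_add, coeff_one, coeff_mul]
  refine add_nonneg (by split_ifs <;> norm_num) (Finset.sum_nonneg fun ij hij => ?_)
  have hsum := mem_antidiagonal.1 hij
  rcases Nat.eq_zero_or_pos ij.1 with h0 | hpos
  · rw [h0, hW0, zero_mul]
  · exact mul_nonneg (hW _) (hV _ (by omega))

lemma nonnegCoeff_of_eq_one_add_mul (hW : NonnegCoeff W) (hW0 : coeff 0 W = 0)
    (hV : V = 1 + W * V) : NonnegCoeff V := fun n => by
  induction n using Nat.strong_induction_on with
  | _ n ih =>
    rw [hV]
    exact coeff_one_add_mul_nonneg hW hW0 ih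

lemma sum_range_coeff_mul_le (hW : NonnegCoeff W) (hV : NonnegCoeff V)
    (hs : HasSum (fun n => coeff n W) ω) (N : ℕ) :
    ∑ n ∈ Finset.range N, coeff n (W * V) ≤ ω * ∑ n ∈ Finset.range N, coeff n V := by
  have hdisj : (Finset.range N : Set ℕ).PairwiseDisjoint antidiagonal :=
    fun i _ j _ hij => Finset.disjoint_left.2 fun x hx hx' =>
      hij ((mem_antidiagonal.1 hx).symm.trans (mem_antidiagonal.1 hx'))
  simp only [coeff_mul]
  rw [← Finset.sum_biUnion hdisj]
  calc ∑ x ∈ (Finset.range N).biUnion antidiagonal, coeff x.1 W * coeff x.2 V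
      ≤ ∑ x ∈ Finset.range N ×ˢ Finset.range N, coeff x.1 W * coeff x.2 V := by
        refine Finset.sum_le_sum_of_subset_of_nonneg (fun x hx => ?_)
          fun x _ _ => mul_nonneg (hW _) (hV _)
        simp only [Finset.mem_biUnion, Finset.mem_range, mem_antidiagonal,
          Finset.mem_product] at hx ⊢
        omega
    _ = (∑ n ∈ Finset.range N, coeff n W) * ∑ n ∈ Finset.range N, coeff n V := by
        rw [Finset.sum_product, Finset.sum_mul_sum]
    _ ≤ ω * ∑ n ∈ Finset.range N, coeff n V :=
        mul_le_mul_of_nonneg_right (sum_le_hasSum _ (fun i _ => hW i) hs)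
          (Finset.sum_nonneg fun i _ => hV i)

lemma hasSum_coeff_of_eq_one_add_mul (hW : NonnegCoeff W) (hW0 : coeff 0 W = 0)
    (hV : V = 1 + W * V) (hs : HasSum (fun n => coeff n W) ω) (hω : ω < 1) :
    HasSum (fun n => coeff n V) (1 / (1 - ω)) := by
  have hVn := nonnegCoeff_of_eq_one_add_mul hW hW0 hV
  have hω' : 0 < 1 - ω := by linarith
  have hone : HasSum (fun n => coeff n (1 : ℝ⟦X⟧)) 1 := by
    simp only [coeff_one]
    exact hasSum_ite_eq 0 1
  have hsum : Summable fun n => coeff n V := by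
    refine summable_of_sum_range_le (c := 1 / (1 - ω)) hVn fun N => ?_
    have hpartial : ∑ n ∈ Finset.range N, coeff n V ≤
        1 + ω * ∑ n ∈ Finset.range N, coeff n V := calc
      ∑ n ∈ Finset.range N, coeff n V =
          ∑ n ∈ Finset.range N, coeff n (1 : ℝ⟦X⟧) + ∑ n ∈ Finset.range N, coeff n (W * V) := by
        simp only [← Finset.sum_add_distrib, ← map_add, ← hV]
      _ ≤ 1 + ω * ∑ n ∈ Finset.range N, coeff n V := by
        refine add_le_add (sum_le_hasSum _ (fun n _ => ?_) hone)
          (sum_range_coeff_mul_le hW hVn hs N)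
        rw [coeff_one]
        split_ifs <;> norm_num
    rw [le_div_iff₀ hω']
    linarith
  obtain ⟨v, hv⟩ := hsum
  have hrec := hone.add (hasSum_coeff_mul hs hv)
  simp only [← map_add, ← hV] at hrec
  have hv_eq := hv.unique hrec
  rwa [show 1 / (1 - ω) = v by field_simp; linarith]

lemma coeff_eq_sum_antidiagonal_of_eq_one_add_mul (hV : V = 1 + W * V) {n : ℕ} (hn : n ≠ 0) :
    coeff n V = ∑ x ∈ antidiagonal n, coeff x.1 W * coeff x.2 V := by
  conv_lhs => rw [hV]
  rw [map_add, coeff_one, if_neg hn, zero_add, coeff_mul]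

lemma sum_antidiagonal_fst_le (hW : NonnegCoeff W) (hs : HasSum (fun n => coeff n W) ω) (n : ℕ) :
    ∑ x ∈ antidiagonal n, coeff x.1 W ≤ ω := by
  rw [Finset.Nat.sum_antidiagonal_eq_sum_range_succ_mk]
  exact sum_le_hasSum _ (fun i _ => hW i) hs

lemma sum_antidiagonal_snd_le (hW : NonnegCoeff W) (hs : HasSum (fun n => coeff n W) ω) (n : ℕ) :
    ∑ x ∈ antidiagonal n, coeff x.2 W ≤ ω := by
  rw [← Finset.Nat.sum_antidiagonal_swap]
  exact sum_antidiagonal_fst_le hW hs n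

lemma threeHalvesPow_mul_sum_antidiagonal_le (hW : NonnegCoeff W) (hW0 : coeff 0 W = 0)
    (hV : NonnegCoeff V) (hsW : HasSum (fun n => coeff n W) ω) (hsV : HasSum (fun n => coeff n V) v)
    {c C D K : ℝ} (hc : 0 ≤ c) (hC0 : 0 ≤ C) (hD0 : 0 ≤ D) (hK : 0 ≤ K)
    (hD : ∀ i j, threeHalvesPow (i + j) ≤ c * threeHalvesPow j + D * threeHalvesPow i)
    (hC : ∀ n, threeHalvesPow n * coeff n W ≤ C) {n : ℕ}
    (hVK : ∀ j < n, threeHalvesPow j * coeff j V ≤ K) :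
    threeHalvesPow n * ∑ x ∈ antidiagonal n, coeff x.1 W * coeff x.2 V ≤
      c * K * ω + D * C * v := by
  have hterm : ∀ x ∈ antidiagonal n, threeHalvesPow n * (coeff x.1 W * coeff x.2 V) ≤
      c * K * coeff x.1 W + D * C * coeff x.2 V := by
    rintro ⟨i, j⟩ hij
    obtain rfl := mem_antidiagonal.1 hij
    have hWi := hW i
    have hVj := hV j
    rcases Nat.eq_zero_or_pos i with rfl | hi
    · rw [hW0, zero_mul, mul_zero, mul_zero, zero_add]
      positivity
    calc threeHalvesPow (i + j) * (coeff i W * coeff j V)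
        ≤ (c * threeHalvesPow j + D * threeHalvesPow i) * (coeff i W * coeff j V) := by
          gcongr; exact hD i j
      _ = c * (threeHalvesPow j * coeff j V) * coeff i W +
          D * (threeHalvesPow i * coeff i W) * coeff j V := by ring
      _ ≤ c * K * coeff i W + D * C * coeff j V := by
          gcongr
          · exact hVK j (by omega)
          · exact hC i
  rw [Finset.mul_sum]
  refine (Finset.sum_le_sum hterm).trans ?_
  rw [Finset.sum_add_distrib, ← Finset.mul_sum, ← Finset.mul_sum]
  gcongr
  · exact sum_antidiagonal_fst_le hW hsW n
  · exact sum_antidiagonal_snd_le hV hsV n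

-- In the convolution `W * V` the bound `K` for `V` reproduces itself up to the factor `c * ω < 1`.
lemma hasThreeHalvesBound_of_eq_one_add_mul (hW : NonnegCoeff W) (hW0 : coeff 0 W = 0)
    (hV : V = 1 + W * V) (hs : HasSqrtSingularity W ω l) (hω : ω < 1) :
    HasThreeHalvesBound V := by
  have hVn := nonnegCoeff_of_eq_one_add_mul hW hW0 hV
  have hsV := hasSum_coeff_of_eq_one_add_mul hW hW0 hV hs.hasSum hω
  have hω0 : 0 ≤ ω := hs.hasSum.nonneg hW
  set v := 1 / (1 - ω)
  have : 0 ≤ v := hsV.nonneg hVn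
  obtain ⟨C, hC⟩ := hs.hasThreeHalvesBound
  have hC0 : 0 ≤ C := (abs_nonneg _).trans (hC 0)
  obtain ⟨c, hc1, hcω⟩ : ∃ c : ℝ, 1 < c ∧ c * ω < 1 :=
    ⟨2 / (1 + ω), by rw [lt_div_iff₀] <;> linarith,
      by rw [div_mul_eq_mul_div, div_lt_one] <;> linarith⟩
  obtain ⟨D, hD0, hD⟩ := exists_threeHalvesPow_add_le hc1
  have hε : 0 < 1 - c * ω := by linarith
  set K := D * C * v / (1 - c * ω) with hK
  have hK0 : 0 ≤ K := by positivity
  refine ⟨K, fun n => ?_⟩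
  rw [abs_of_nonneg (mul_nonneg (threeHalvesPow_nonneg n) (hVn n))]
  induction n using Nat.strong_induction_on with
  | _ n ih =>
    rcases eq_or_ne n 0 with rfl | hn
    · simpa [threeHalvesPow] using hK0
    rw [coeff_eq_sum_antidiagonal_of_eq_one_add_mul hV hn]
    refine (threeHalvesPow_mul_sum_antidiagonal_le hW hW0 hVn hs.hasSum hsV (by linarith) hC0 hD0
      hK0 hD (fun n => (le_abs_self _).trans (hC n)) ih).trans_eq ?_
    rw [hK]
    field_simp
    ring

lemma coeff_X_mul_derivative (F : ℝ⟦X⟧) (n : ℕ) : coeff n (X * d⁄dX ℝ F) = n * coeff n F := by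
  cases n with
  | zero => simp
  | succ n => rw [coeff_succ_X_mul, coeff_derivative]; push_cast; ring

lemma tendsto_sqrt_mul_coeff_mul_X_mul_derivative (hU : HasSum (fun n => coeff n U) u)
    (hUb : HasThreeHalvesBound U) (hW : HasSqrtSingularity W ω l) :
    Tendsto (fun n : ℕ => √(n : ℝ) * coeff n (U * (X * d⁄dX ℝ W))) atTop (𝓝 (u * l)) := by
  obtain ⟨B, hB⟩ := hUb
  obtain ⟨C, hC⟩ := hW.hasThreeHalvesBound
  have hmain := tendsto_sum_mul_shift hU.summable tendsto_div_two_add_one_atTop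
    (fun n => by omega) hW.tendsto
  have herr := tendsto_sum_mul_shift_mul_div hU.summable tendsto_div_two_add_one_atTop
    (fun n => by omega) hC
  have hsmall := tendsto_sum_mul_shift_mul_div hW.hasSum.summable tendsto_add_one_div_two_atTop
    (fun n => by omega) hB
  rw [hU.tsum_eq] at hmain
  have h := (hmain.sub herr).add hsmall
  rw [sub_zero, add_zero] at h
  refine h.congr' ?_
  filter_upwards [eventually_gt_atTop 0] with n hn
  have hn0 : (n : ℝ) ≠ 0 := by positivity
  rw [coeff_mul_eq_sum_half_add_sum_half, mul_add, Finset.mul_sum, Finset.mul_sum,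
    ← Finset.sum_sub_distrib]
  simp only [coeff_X_mul_derivative, threeHalvesPow]
  refine congrArg₂ _ (Finset.sum_congr rfl fun i hi => ?_) (Finset.sum_congr rfl fun i _ => ?_)
  · have hin : i ≤ n := by have := Finset.mem_range.1 hi; omega
    rw [Nat.cast_sub hin]
    field_simp
  · field_simp

-- Differentiating `V = 1 + W * V` gives `V' = V ^ 2 * W'`, whose right-hand side only needs the
-- boundedness of the coefficients of `V`.
lemma HasSqrtSingularity.of_eq_one_add_mul (hs : HasSqrtSingularity W ω l) (hW : NonnegCoeff W)
    (hW0 : coeff 0 W = 0) (hV : V = 1 + W * V) (hω : ω < 1) :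
    HasSqrtSingularity V (1 / (1 - ω)) (l / (1 - ω) ^ 2) := by
  have hsV := hasSum_coeff_of_eq_one_add_mul hW hW0 hV hs.hasSum hω
  have hVb := hasThreeHalvesBound_of_eq_one_add_mul hW hW0 hV hs hω
  have hder : X * d⁄dX ℝ V = V * V * (X * d⁄dX ℝ W) := by
    have h : d⁄dX ℝ V = d⁄dX ℝ (1 + W * V) := by rw [← hV]
    rw [map_add, Derivation.map_one_eq_zero, Derivation.leibniz, smul_eq_mul, smul_eq_mul] at h
    linear_combination X * V * h - X * (d⁄dX ℝ V) * hV
  refine ⟨hsV, ?_⟩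
  have h := tendsto_sqrt_mul_coeff_mul_X_mul_derivative (hasSum_coeff_mul hsV hsV)
    (hVb.mul hVb hsV.summable hsV.summable) hs
  rw [show 1 / (1 - ω) * (1 / (1 - ω)) * l = l / (1 - ω) ^ 2 by field_simp] at h
  refine h.congr fun n => ?_
  rw [← hder, coeff_X_mul_derivative, threeHalvesPow]
  ring

end Inverse

end Asymptotics

/-! ### Geometric and Catalan series -/

section BasicSeries

lemma HasThreeHalvesBound.summable {F : ℝ⟦X⟧} (hF : HasThreeHalvesBound F) :
    Summable fun n => coeff n F := by
  obtain ⟨B, hB⟩ := hF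
  refine summable_of_isBigO_nat
    (Real.summable_one_div_nat_rpow.2 (show (1 : ℝ) < 3 / 2 by norm_num))
    (Asymptotics.IsBigO.of_bound B ?_)
  filter_upwards [eventually_gt_atTop 0] with n hn
  have hrpow : (n : ℝ) ^ (3 / 2 : ℝ) = threeHalvesPow n := by
    rw [threeHalvesPow, Real.sqrt_eq_rpow, ← Real.rpow_one_add' (by positivity) (by norm_num)]
    norm_num
  have hpos := threeHalvesPow_pos hn
  rw [hrpow, norm_div, norm_one, Real.norm_of_nonneg hpos.le, mul_one_div, le_div_iff₀ hpos,
    mul_comm]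
  simpa only [abs_mul, abs_of_pos hpos, Real.norm_eq_abs] using hB n

lemma HasSqrtSingularity.smul {F : ℝ⟦X⟧} {s l : ℝ} (hF : HasSqrtSingularity F s l) (a : ℝ) :
    HasSqrtSingularity (a • F) (a * s) (a * l) := by
  refine ⟨by simpa using hF.hasSum.mul_left a, ?_⟩
  simpa [mul_left_comm] using hF.tendsto.const_mul a

lemma hasSqrtSingularity_of_coeff_eq_zero {F : ℝ⟦X⟧} {N : ℕ} (hF : ∀ n, N ≤ n → coeff n F = 0) :
    HasSqrtSingularity F (∑ n ∈ Finset.range N, coeff n F) 0 := by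
  refine ⟨hasSum_sum_of_ne_finset_zero fun n hn => hF n (by simpa using hn), ?_⟩
  refine tendsto_const_nhds.congr' ?_
  filter_upwards [eventually_ge_atTop N] with n hn
  rw [hF n hn, mul_zero]

lemma hasSqrtSingularity_one : HasSqrtSingularity 1 1 0 := by
  simpa using hasSqrtSingularity_of_coeff_eq_zero (F := 1) (N := 1) fun n hn => by
    rw [coeff_one, if_neg (by omega)]

lemma hasSqrtSingularity_X : HasSqrtSingularity X 1 0 := by
  simpa [Finset.sum_range_succ, coeff_X] using
    hasSqrtSingularity_of_coeff_eq_zero (F := X) (N := 2) fun n hn => by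
      rw [coeff_X, if_neg (by omega)]

lemma NonnegCoeff.smul {F : ℝ⟦X⟧} (hF : NonnegCoeff F) {a : ℝ} (ha : 0 ≤ a) :
    NonnegCoeff (a • F) := fun n => by
  rw [map_smul, smul_eq_mul]
  exact mul_nonneg ha (hF n)

lemma nonnegCoeff_one : NonnegCoeff 1 := fun n => by
  rw [coeff_one]; split_ifs <;> norm_num

lemma nonnegCoeff_X : NonnegCoeff X := fun n => by
  rw [coeff_X]; split_ifs <;> norm_num

/-- The power series `1 / (1 - a * X)`. -/
noncomputable def geometricSeries (a : ℝ) : ℝ⟦X⟧ := mk fun n => a ^ n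

lemma geometricSeries_mul (a : ℝ) : geometricSeries a * (1 - a • X) = 1 := by
  ext n
  rw [mul_sub, mul_one, mul_smul_comm, map_sub, map_smul, coeff_one, geometricSeries]
  cases n with
  | zero => simp
  | succ n => simp [coeff_succ_mul_X, pow_succ']

lemma nonnegCoeff_geometricSeries {a : ℝ} (ha : 0 ≤ a) : NonnegCoeff (geometricSeries a) :=
  fun n => by rw [geometricSeries, coeff_mk]; positivity

lemma hasSqrtSingularity_geometricSeries {a : ℝ} (h0 : 0 ≤ a) (h1 : a < 1) :
    HasSqrtSingularity (geometricSeries a) (1 / (1 - a)) 0 := by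
  refine ⟨by simpa [geometricSeries] using hasSum_geometric_of_lt_one h0 h1, ?_⟩
  have hsq := tendsto_pow_const_mul_const_pow_of_abs_lt_one 2 (abs_lt.2 ⟨by linarith, h1⟩)
  refine squeeze_zero (fun n => mul_nonneg (threeHalvesPow_nonneg n)
    (nonnegCoeff_geometricSeries h0 n)) (fun n => ?_) hsq
  rw [geometricSeries, coeff_mk, threeHalvesPow, pow_two]
  gcongr
  rw [Real.sqrt_le_left (by positivity)]
  norm_cast
  nlinarith

/-- The generating function of the Catalan numbers at `a * X`. -/
noncomputable def catalanSeriesAt (a : ℝ) : ℝ⟦X⟧ := mk fun n => a ^ n * catalan n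

lemma catalanSeriesAt_eq (a : ℝ) : catalanSeriesAt a = 1 + a • (X * catalanSeriesAt a ^ 2) := by
  have h : catalanSeriesAt a = rescale a (map (Nat.castRingHom ℝ) catalanSeries) := by
    ext n
    simp [catalanSeriesAt, coeff_rescale]
  have hrec := congrArg (fun F => rescale a (map (Nat.castRingHom ℝ) F))
    catalanSeries_sq_mul_X_add_one
  simp only [map_add, map_mul, map_pow, map_one, map_X, rescale_X, ← h] at hrec
  rw [smul_eq_C_mul]
  linear_combination -hrec

lemma eq_one_add_mul_sq_of_hasSum_catalanSeriesAt {a m : ℝ}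
    (hm : HasSum (fun n => coeff n (catalanSeriesAt a)) m) :
    m = 1 + a * m ^ 2 := by
  have h := hasSqrtSingularity_one.hasSum.add ((hasSum_coeff_mul hasSqrtSingularity_X.hasSum
    (hasSum_coeff_mul hm hm)).mul_left a)
  simp only [← smul_eq_mul (a := a), ← map_smul, ← map_add, ← pow_two,
    ← catalanSeriesAt_eq] at h
  have := hm.unique h
  simpa using this

lemma centralBinom_sq_mul_wallis (n : ℕ) :
    ((n.centralBinom : ℝ) / 4 ^ n) ^ 2 * ((2 * n + 1) * Real.Wallis.W n) = 1 := by
  have hfact : (n.centralBinom : ℝ) * (n.factorial : ℝ) ^ 2 = (2 * n).factorial := by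
    have := Nat.choose_mul_factorial_mul_factorial (show n ≤ 2 * n by omega)
    rw [show 2 * n - n = n by omega] at this
    rw [Nat.centralBinom, ← this]
    push_cast
    ring
  have hbinom : (n.centralBinom : ℝ) ≠ 0 := by exact_mod_cast n.centralBinom_ne_zero
  rw [Real.Wallis.W_eq_factorial_ratio, ← hfact, pow_mul, show (2 : ℝ) ^ 4 = 4 ^ 2 by norm_num,
    ← pow_mul, mul_comm 2 n, pow_mul]
  field_simp

lemma tendsto_mul_centralBinom_div_pow_sq :
    Tendsto (fun n : ℕ => (n : ℝ) * ((n.centralBinom : ℝ) / 4 ^ n) ^ 2) atTop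
      (𝓝 (1 / Real.pi)) := by
  have hW : Tendsto (fun n : ℕ => (2 + 1 / (n : ℝ)) * Real.Wallis.W n) atTop (𝓝 Real.pi) := by
    have h := ((tendsto_const_div_atTop_nhds_zero_nat (1 : ℝ)).const_add 2).mul
      Real.Wallis.tendsto_W_nhds_pi_div_two
    rwa [show (2 + 0) * (Real.pi / 2) = Real.pi by ring] at h
  rw [one_div]
  refine (hW.inv₀ Real.pi_ne_zero).congr' ?_
  filter_upwards [eventually_gt_atTop 0] with n hn
  have hn' : (n : ℝ) ≠ 0 := by positivity
  refine inv_eq_of_mul_eq_one_left ?_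
  calc (n : ℝ) * ((n.centralBinom : ℝ) / 4 ^ n) ^ 2 * ((2 + 1 / (n : ℝ)) * Real.Wallis.W n)
      = ((n.centralBinom : ℝ) / 4 ^ n) ^ 2 * ((2 * n + 1) * Real.Wallis.W n) := by field_simp
    _ = 1 := centralBinom_sq_mul_wallis n

lemma tendsto_threeHalvesPow_mul_catalan :
    Tendsto (fun n : ℕ => threeHalvesPow n * ((1 / 4 : ℝ) ^ n * catalan n)) atTop
      (𝓝 (√(1 / Real.pi))) := by
  have h := (tendsto_natCast_div_add_atTop (1 : ℝ)).mul tendsto_mul_centralBinom_div_pow_sq.sqrt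
  rw [one_mul] at h
  refine h.congr fun n => ?_
  have hcatalan : ((n : ℝ) + 1) * catalan n = n.centralBinom := by
    exact_mod_cast succ_mul_catalan_eq_centralBinom n
  have hn : (n : ℝ) + 1 ≠ 0 := by positivity
  rw [Real.sqrt_mul (by positivity), Real.sqrt_sq (by positivity), ← hcatalan, threeHalvesPow,
    one_div, inv_pow]
  field_simp

lemma hasSqrtSingularity_catalanSeriesAt_quarter :
    HasSqrtSingularity (catalanSeriesAt (1 / 4)) 2 (√(1 / Real.pi)) := by
  have hlim : Tendsto (fun n => threeHalvesPow n * coeff n (catalanSeriesAt (1 / 4))) atTop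
      (𝓝 (√(1 / Real.pi))) := by
    simpa only [catalanSeriesAt, coeff_mk] using tendsto_threeHalvesPow_mul_catalan
  obtain ⟨B, hB⟩ := (Metric.isBounded_range_of_tendsto _ hlim).exists_norm_le
  obtain ⟨k, hk⟩ := HasThreeHalvesBound.summable ⟨B, fun n => hB _ ⟨n, rfl⟩⟩
  have hk2 : k = 2 := by
    nlinarith [eq_one_add_mul_sq_of_hasSum_catalanSeriesAt hk, sq_nonneg (k - 2)]
  exact ⟨hk2 ▸ hk, hlim⟩

lemma exists_hasSqrtSingularity_catalanSeriesAt {a : ℝ} (h0 : 0 ≤ a) (h1 : a < 1 / 4) :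
    ∃ m, m = 1 + a * m ^ 2 ∧ HasSqrtSingularity (catalanSeriesAt a) m 0 := by
  have hquarter := hasSqrtSingularity_catalanSeriesAt_quarter
  have hcoeff : ∀ n, coeff n (catalanSeriesAt a) =
      (4 * a) ^ n * coeff n (catalanSeriesAt (1 / 4)) := fun n => by
    rw [catalanSeriesAt, catalanSeriesAt, coeff_mk, coeff_mk, ← mul_assoc, ← mul_pow]
    ring
  have hlim : Tendsto (fun n => threeHalvesPow n * coeff n (catalanSeriesAt a)) atTop (𝓝 0) := by
    have h := (tendsto_pow_atTop_nhds_zero_of_lt_one (show 0 ≤ 4 * a by linarith)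
      (by linarith)).mul hquarter.tendsto
    rw [zero_mul] at h
    refine h.congr fun n => ?_
    rw [hcoeff]
    ring
  obtain ⟨m, hm⟩ : Summable fun n => coeff n (catalanSeriesAt a) := by
    refine Summable.of_norm_bounded hquarter.hasSum.summable.norm fun n => ?_
    rw [hcoeff, norm_mul, Real.norm_of_nonneg (by positivity)]
    exact mul_le_of_le_one_left (norm_nonneg _) (pow_le_one₀ (by linarith) (by linarith))
  exact ⟨m, eq_one_add_mul_sq_of_hasSum_catalanSeriesAt hm, hm, hlim⟩

end BasicSeries

/-! ### The generating functions at `X / 5` -/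

namespace Scaled

/-- The variable of the generating functions, scaled so that their dominant singularity `z = 1 / 5`
sits at `X = 1`. -/
noncomputable def z : ℝ⟦X⟧ := (1 / 5 : ℝ) • X

/-- The series `1 / (1 - z)`. -/
noncomputable def p : ℝ⟦X⟧ := geometricSeries (1 / 5)

/-- The series `1 / (1 - 2 * z)`. -/
noncomputable def twoGeom : ℝ⟦X⟧ := geometricSeries (2 / 5)

/-- The series `1 / (2 - z)`. -/
noncomputable def halfGeom : ℝ⟦X⟧ := (1 / 2 : ℝ) • geometricSeries (1 / 10)

/-- The Catalan series at `z / (1 - z)`, that is `((1 - z) - √((1 - z) * (1 - 5 * z))) / (2 * z)`.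
The two factors under the root are expressed through `√(1 - 4 * x) = 1 - 2 * x * C x`, where `C` is
the Catalan series. -/
noncomputable def q : ℝ⟦X⟧ :=
  (5 / 4 : ℝ) • catalanSeriesAt (1 / 4) + (1 / 4 : ℝ) • catalanSeriesAt (1 / 20)
    - (1 / 8 : ℝ) • (X * (catalanSeriesAt (1 / 4) * catalanSeriesAt (1 / 20))) - (1 / 2 : ℝ) • 1

/-- The series `1 / (1 - z * q)`. -/
noncomputable def h : ℝ⟦X⟧ := (1 + q) * halfGeom

/-- The series `z * q / (1 - z)`. -/
noncomputable def t : ℝ⟦X⟧ := z * p * q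

/-- The series `w` for which the denominator of the generating function, at weight `1` of the left
points, is `(1 - z) * (1 - 2 * z) * (1 - w)`. -/
noncomputable def reducedKernel : ℝ⟦X⟧ := p * (t + z * z * t * h * twoGeom)

/-- The inverse of the denominator at weight `1` of the left points. -/
noncomputable def denomInv : ℝ⟦X⟧ := p * twoGeom * (1 - reducedKernel)⁻¹

/-- The numerator of the generating function at weight `1` of the left points. -/
noncomputable def numer : ℝ⟦X⟧ := z * z * z * (z * p) * (q * q) * (h * h)

/-- The derivative of the denominator at weight `1` of the left points. -/
noncomputable def denomDeriv : ℝ⟦X⟧ :=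
  (2 : ℝ) • (z * z) - z * ((1 - t) + (1 - z) + t * z * h)

/-- The coefficients of the expansion in `ε` of the generating function at weight `1 + ε`, which is
`numer * (1 + ε)` divided by `1 / denomInv + denomDeriv * ε + z ^ 2 * ε ^ 2`. -/
noncomputable def taylorCoeff : ℕ → ℝ⟦X⟧
  | 0 => numer * denomInv
  | 1 => (numer - denomDeriv * taylorCoeff 0) * denomInv
  | k + 2 => -(denomDeriv * taylorCoeff (k + 1) + z * z * taylorCoeff k) * denomInv

lemma p_mul : p * (1 - z) = 1 := geometricSeries_mul (1 / 5)

lemma twoGeom_mul : twoGeom * (1 - 2 * z) = 1 := by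
  rw [twoGeom, z]
  linear_combination (norm := algebra) geometricSeries_mul (2 / 5)

lemma halfGeom_mul : halfGeom * (2 - z) = 1 := by
  rw [halfGeom, z]
  linear_combination (norm := algebra) geometricSeries_mul (1 / 10)

lemma q_quadratic : (1 - z) * q = (1 - z) + z * q ^ 2 := by
  have hK := catalanSeriesAt_eq (1 / 4)
  have hM := catalanSeriesAt_eq (1 / 20)
  rw [q, z]
  set K := catalanSeriesAt (1 / 4)
  set M := catalanSeriesAt (1 / 20)
  linear_combination (norm := algebra)
    (5 / 4 : ℝ) • (1 - (1 / 10 : ℝ) • (X * M)) ^ 2 * hK + (1 / 4 : ℝ) • (1 - X) * hM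

lemma q_eq : q = 1 + z * p * q ^ 2 := by
  linear_combination p * q_quadratic + (1 - q) * p_mul

lemma h_mul : h * (1 - z * q) = 1 := by
  rw [h]
  linear_combination halfGeom_mul + halfGeom * q_quadratic

lemma coeff_zero_z_mul (F : ℝ⟦X⟧) : coeff 0 (z * F) = 0 := by
  rw [z, smul_mul_assoc, map_smul, coeff_zero_X_mul, smul_zero]

lemma coeff_zero_reducedKernel : coeff 0 reducedKernel = 0 := by
  rw [reducedKernel, t, show p * (z * p * q + z * z * (z * p * q) * h * twoGeom) =
    z * (p * (p * q + z * (z * p * q) * h * twoGeom)) by ring, coeff_zero_z_mul]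

lemma one_sub_reducedKernel_inv :
    (1 - reducedKernel)⁻¹ = 1 + reducedKernel * (1 - reducedKernel)⁻¹ := by
  have hcoeff : constantCoeff (1 - reducedKernel) ≠ 0 := by
    rw [← coeff_zero_eq_constantCoeff_apply, map_sub, coeff_zero_reducedKernel, coeff_zero_one,
      sub_zero]
    exact one_ne_zero
  linear_combination PowerSeries.mul_inv_cancel _ hcoeff

lemma denomInv_mul :
    denomInv * ((1 - z - t) * (1 - z - z) - z * z * t * h) = 1 := by
  have hinv := one_sub_reducedKernel_inv
  rw [denomInv]
  set V := (1 - reducedKernel)⁻¹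
  rw [reducedKernel] at hinv
  linear_combination hinv + V * (1 - t * p) * twoGeom_mul +
    V * (1 - 2 * z) * twoGeom * p_mul

lemma nonnegCoeff_z : NonnegCoeff z := nonnegCoeff_X.smul (by norm_num)

lemma nonnegCoeff_p : NonnegCoeff p := nonnegCoeff_geometricSeries (by norm_num)

lemma nonnegCoeff_twoGeom : NonnegCoeff twoGeom := nonnegCoeff_geometricSeries (by norm_num)

lemma nonnegCoeff_q : NonnegCoeff q := by
  intro n
  induction n using Nat.strong_induction_on with
  | _ n ih =>
    rw [q_eq]
    refine coeff_one_add_mul_nonneg (nonnegCoeff_z.mul nonnegCoeff_p) (coeff_zero_z_mul p)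
      fun j hj => ?_
    rw [pow_two, coeff_mul]
    refine Finset.sum_nonneg fun ab hab => ?_
    have := Finset.HasAntidiagonal.mem_antidiagonal.1 hab
    exact mul_nonneg (ih _ (by omega)) (ih _ (by omega))

lemma nonnegCoeff_h : NonnegCoeff h :=
  (nonnegCoeff_one.add nonnegCoeff_q).mul
    ((nonnegCoeff_geometricSeries (by norm_num)).smul (by norm_num))

lemma nonnegCoeff_t : NonnegCoeff t := (nonnegCoeff_z.mul nonnegCoeff_p).mul nonnegCoeff_q

lemma nonnegCoeff_reducedKernel : NonnegCoeff reducedKernel :=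
  nonnegCoeff_p.mul <| nonnegCoeff_t.add <|
    (((nonnegCoeff_z.mul nonnegCoeff_z).mul nonnegCoeff_t).mul nonnegCoeff_h).mul
      nonnegCoeff_twoGeom

lemma exists_hasSqrtSingularity_q : ∃ l, l ≠ 0 ∧ HasSqrtSingularity q 2 l := by
  obtain ⟨m, hm, hM⟩ :=
    exists_hasSqrtSingularity_catalanSeriesAt (a := 1 / 20) (by norm_num) (by norm_num)
  have hK := hasSqrtSingularity_catalanSeriesAt_quarter
  have hm10 : 10 - m ≠ 0 := fun h => by
    obtain rfl : m = 10 := by linarith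
    norm_num at hm
  refine ⟨√(1 / Real.pi) * ((10 - m) / 8), by positivity, ?_⟩
  exact ((((hK.smul _).add (hM.smul _)).sub ((hasSqrtSingularity_X.mul (hK.mul hM)).smul _)).sub
    (hasSqrtSingularity_one.smul _)).congr (by ring) (by ring)

lemma hasSqrtSingularity_z : HasSqrtSingularity z (1 / 5) 0 :=
  (hasSqrtSingularity_X.smul (1 / 5)).congr (by norm_num) (by norm_num)

lemma hasSqrtSingularity_p : HasSqrtSingularity p (5 / 4) 0 :=
  (hasSqrtSingularity_geometricSeries (by norm_num) (by norm_num)).congr (by norm_num) rfl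

lemma hasSqrtSingularity_twoGeom : HasSqrtSingularity twoGeom (5 / 3) 0 :=
  (hasSqrtSingularity_geometricSeries (by norm_num) (by norm_num)).congr (by norm_num) rfl

lemma hasSqrtSingularity_halfGeom : HasSqrtSingularity halfGeom (5 / 9) 0 :=
  ((hasSqrtSingularity_geometricSeries (by norm_num) (by norm_num)).smul (1 / 2)).congr
    (by norm_num) (by norm_num)

variable {l : ℝ}

lemma hasSqrtSingularity_h (hq : HasSqrtSingularity q 2 l) :
    HasSqrtSingularity h (5 / 3) (5 / 9 * l) :=
  ((hasSqrtSingularity_one.add hq).mul hasSqrtSingularity_halfGeom).congr (by norm_num) (by ring)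

lemma hasSqrtSingularity_t (hq : HasSqrtSingularity q 2 l) :
    HasSqrtSingularity t (1 / 2) (1 / 4 * l) :=
  ((hasSqrtSingularity_z.mul hasSqrtSingularity_p).mul hq).congr (by norm_num) (by ring)

lemma hasSqrtSingularity_reducedKernel (hq : HasSqrtSingularity q 2 l) :
    HasSqrtSingularity reducedKernel (25 / 36) (10 / 27 * l) := by
  have hz := hasSqrtSingularity_z
  have ht := hasSqrtSingularity_t hq
  exact (hasSqrtSingularity_p.mul (ht.add ((((hz.mul hz).mul ht).mul
    (hasSqrtSingularity_h hq)).mul hasSqrtSingularity_twoGeom))).congr (by norm_num) (by ring)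

lemma hasSqrtSingularity_denomInv (hq : HasSqrtSingularity q 2 l) :
    HasSqrtSingularity denomInv (75 / 11) (1000 / 121 * l) :=
  ((hasSqrtSingularity_p.mul hasSqrtSingularity_twoGeom).mul
    ((hasSqrtSingularity_reducedKernel hq).of_eq_one_add_mul nonnegCoeff_reducedKernel
      coeff_zero_reducedKernel one_sub_reducedKernel_inv (by norm_num))).congr
    (by norm_num) (by ring)

lemma hasSqrtSingularity_numer (hq : HasSqrtSingularity q 2 l) :
    HasSqrtSingularity numer (1 / 45) (1 / 27 * l) := by
  have hz := hasSqrtSingularity_z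
  have hh := hasSqrtSingularity_h hq
  exact (((((hz.mul hz).mul hz).mul (hz.mul hasSqrtSingularity_p)).mul (hq.mul hq)).mul
    (hh.mul hh)).congr (by norm_num) (by ring)

lemma hasSqrtSingularity_denomDeriv (hq : HasSqrtSingularity q 2 l) :
    HasSqrtSingularity denomDeriv (-16 / 75) (1 / 45 * l) := by
  have hone := hasSqrtSingularity_one
  have hz := hasSqrtSingularity_z
  have ht := hasSqrtSingularity_t hq
  exact (((hz.mul hz).smul 2).sub (hz.mul (((hone.sub ht).add (hone.sub hz)).add
    ((ht.mul hz).mul (hasSqrtSingularity_h hq))))).congr (by norm_num) (by ring)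

lemma hasSqrtSingularity_taylorCoeff_zero (hq : HasSqrtSingularity q 2 l) :
    HasSqrtSingularity (taylorCoeff 0) (5 / 33) (475 / 1089 * l) :=
  ((hasSqrtSingularity_numer hq).mul (hasSqrtSingularity_denomInv hq)).congr
    (by norm_num) (by ring)

lemma hasSqrtSingularity_h_add_taylorCoeff_zero (hq : HasSqrtSingularity q 2 l) :
    HasSqrtSingularity (h + taylorCoeff 0) (20 / 11) (120 / 121 * l) :=
  ((hasSqrtSingularity_h hq).add (hasSqrtSingularity_taylorCoeff_zero hq)).congr
    (by norm_num) (by ring)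

lemma hasSqrtSingularity_taylorCoeff_one (hq : HasSqrtSingularity q 2 l) :
    HasSqrtSingularity (taylorCoeff 1) (45 / 121) (1750 / 1331 * l) :=
  (((hasSqrtSingularity_numer hq).sub ((hasSqrtSingularity_denomDeriv hq).mul
    (hasSqrtSingularity_taylorCoeff_zero hq))).mul (hasSqrtSingularity_denomInv hq)).congr
    (by norm_num) (by ring)

lemma hasSqrtSingularity_taylorCoeff_two (hq : HasSqrtSingularity q 2 l) :
    HasSqrtSingularity (taylorCoeff 2) (665 / 1331) (34300 / 14641 * l) := by
  have hz := hasSqrtSingularity_z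
  exact ((((hasSqrtSingularity_denomDeriv hq).mul (hasSqrtSingularity_taylorCoeff_one hq)).add
    ((hz.mul hz).mul (hasSqrtSingularity_taylorCoeff_zero hq))).neg.mul
    (hasSqrtSingularity_denomInv hq)).congr (by norm_num) (by ring)

end Scaled

/-! ### Binomial moments -/

section Moments

/-- The embedding of the scaled series into the series in the original variable, with coefficients
polynomial in the indeterminate `ε` whose weight `1 + ε` marks the left points. -/
noncomputable def unscale : ℝ⟦X⟧ →+* (Polynomial ℝ)⟦X⟧ :=
  (PowerSeries.map Polynomial.C).comp (rescale 5)

/-- The scaled series formed by the coefficients of `ε ^ k`. -/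
noncomputable def epsCoeff (k : ℕ) : (Polynomial ℝ)⟦X⟧ →+ ℝ⟦X⟧ where
  toFun F := mk fun n => (coeff n F).coeff k / 5 ^ n
  map_zero' := by ext n; simp
  map_add' F G := by ext n; simp [add_div]

lemma coeff_epsCoeff (k n : ℕ) (F : (Polynomial ℝ)⟦X⟧) :
    coeff n (epsCoeff k F) = (coeff n F).coeff k / 5 ^ n :=
  coeff_mk n fun n => (coeff n F).coeff k / 5 ^ n

lemma coeff_unscale (F : ℝ⟦X⟧) (n : ℕ) :
    coeff n (unscale F) = Polynomial.C (5 ^ n * coeff n F) := by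
  simp [unscale, coeff_rescale]

lemma unscale_z : unscale Scaled.z = X := by
  ext n : 1
  rw [coeff_unscale, Scaled.z, map_smul, coeff_X, coeff_X]
  split_ifs with hn <;> simp [hn]

lemma epsCoeff_unscale_mul (k : ℕ) (F : ℝ⟦X⟧) (G : (Polynomial ℝ)⟦X⟧) :
    epsCoeff k (unscale F * G) = F * epsCoeff k G := by
  ext n
  rw [coeff_epsCoeff, coeff_mul, coeff_mul, Polynomial.finsetSum_coeff, Finset.sum_div]
  refine Finset.sum_congr rfl fun ij hij => ?_
  rw [coeff_unscale, Polynomial.coeff_C_mul, coeff_epsCoeff,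
    ← Finset.HasAntidiagonal.mem_antidiagonal.1 hij, pow_add]
  field_simp

lemma epsCoeff_C_X_mul_zero (F : (Polynomial ℝ)⟦X⟧) : epsCoeff 0 (C Polynomial.X * F) = 0 := by
  ext n
  simp [coeff_epsCoeff]

lemma epsCoeff_C_X_mul_succ (k : ℕ) (F : (Polynomial ℝ)⟦X⟧) :
    epsCoeff (k + 1) (C Polynomial.X * F) = epsCoeff k F := by
  ext n
  simp [coeff_epsCoeff]

lemma epsCoeff_one (k : ℕ) : epsCoeff k 1 = if k = 0 then 1 else 0 := by
  ext n
  rcases k with _ | k <;> rcases n with _ | n <;>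
    simp [coeff_epsCoeff, coeff_one, Polynomial.coeff_one]

lemma epsCoeff_unscale (k : ℕ) (F : ℝ⟦X⟧) :
    epsCoeff k (unscale F) = if k = 0 then F else 0 := by
  rw [← mul_one (unscale F), epsCoeff_unscale_mul, epsCoeff_one, mul_ite, mul_one, mul_zero]

open Scaled

/-- The solution of the recurrence at the weight `1 + ε` of the left points. -/
noncomputable def epsSolution :
    KernelSolution (X : (Polynomial ℝ)⟦X⟧) (X * C (1 + Polynomial.X)) where
  p := unscale p
  q := unscale q
  h := unscale h
  y := invOfUnit (1 - X * C (1 + Polynomial.X)) 1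
  r := invOfUnit (1 - X * invOfUnit (1 - X * C (1 + Polynomial.X)) 1) 1
  V := invOfUnit ((1 - X * C (1 + Polynomial.X) - X * unscale p * unscale q) *
    (1 - X * C (1 + Polynomial.X) - X) -
      X * C (1 + Polynomial.X) * (X * unscale p) * X * unscale q * unscale h) 1
  p_mul := by simpa [unscale_z] using congrArg unscale p_mul
  q_eq := by simpa [unscale_z] using congrArg unscale q_eq
  h_mul := by simpa [unscale_z] using congrArg unscale h_mul
  y_mul := invOfUnit_mul _ _ (by simp)
  r_mul := invOfUnit_mul _ _ (by simp)
  V_mul := mul_invOfUnit _ _ (by simp)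

lemma X_mul_epsSolution_G_quadratic :
    unscale ((1 - z - t) * (1 - z - z) - z * z * t * h) * (X * epsSolution.G) +
      C Polynomial.X * (unscale denomDeriv * (X * epsSolution.G)) +
      C Polynomial.X * (C Polynomial.X * (unscale (z * z) * (X * epsSolution.G))) =
    unscale numer * 1 + C Polynomial.X * (unscale numer * 1) := by
  have hV := epsSolution.V_mul
  have hp : epsSolution.p = unscale p := rfl
  have hq : epsSolution.q = unscale q := rfl
  have hh : epsSolution.h = unscale h := rfl
  have htwo : unscale ((2 : ℝ) • (z * z)) = 2 * (X * X) := by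
    rw [two_smul, map_add, map_mul, unscale_z, two_mul]
  rw [KernelSolution.G, numer, denomDeriv, map_sub unscale ((2 : ℝ) • (z * z)), htwo]
  simp only [t, map_mul, map_sub, map_add, map_one, unscale_z, hp, hq, hh] at hV ⊢
  linear_combination (X * X * X * (X * unscale p) * (unscale q * unscale q) *
    (unscale h * unscale h) * (1 + C Polynomial.X)) * hV

lemma epsCoeff_X_mul_epsSolution_G (k : ℕ) :
    epsCoeff k (X * epsSolution.G) = taylorCoeff k := by
  have hE := X_mul_epsSolution_G_quadratic
  have hzero : epsCoeff 0 (X * epsSolution.G) = taylorCoeff 0 := by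
    have h0 := congrArg (epsCoeff 0) hE
    simp only [map_add, epsCoeff_unscale_mul, epsCoeff_C_X_mul_zero, epsCoeff_one, if_true] at h0
    rw [taylorCoeff]
    linear_combination denomInv * h0 - epsCoeff 0 (X * epsSolution.G) * denomInv_mul
  induction k using Nat.twoStepInduction with
  | zero => exact hzero
  | one =>
    have h1 := congrArg (epsCoeff (0 + 1)) hE
    simp only [map_add, epsCoeff_unscale_mul, epsCoeff_C_X_mul_succ, epsCoeff_C_X_mul_zero,
      epsCoeff_one, hzero, if_true, zero_add, one_ne_zero, if_false] at h1
    rw [taylorCoeff]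
    linear_combination denomInv * h1 - epsCoeff 1 (X * epsSolution.G) * denomInv_mul
  | more k ih ih' =>
    have h2 := congrArg (epsCoeff (k + 2)) hE
    simp only [map_add, epsCoeff_unscale_mul, epsCoeff_C_X_mul_succ, epsCoeff_one, ih, ih',
      k.add_one_ne_zero, (k + 1).add_one_ne_zero, if_false] at h2
    rw [taylorCoeff]
    linear_combination denomInv * h2 - epsCoeff (k + 2) (X * epsSolution.G) * denomInv_mul

open scoped Classical in
/-- The sum of `choose j k` over the numbers `j` of left points of the permutations of length `n` in
the class; the sum of the `k`-th binomial moments, before division by `dCount n`. -/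
noncomputable def binomialMoment (k n : ℕ) : ℝ :=
  ∑ σ : Equiv.Perm (Fin n), if AvoidsD σ then ((leftPts σ).choose k : ℝ) else 0

lemma binomialMoment_succ_div (k n : ℕ) :
    binomialMoment k (n + 1) / 5 ^ (n + 1) =
      coeff (n + 1) ((if k = 0 then h else 0) + taylorCoeff k) := by
  classical
  have hgen : coeff (n + 1) (unscale h + X * epsSolution.G) =
      ∑ σ : Equiv.Perm (Fin (n + 1)),
        if AvoidsD σ then (1 + Polynomial.X : Polynomial ℝ) ^ leftPts σ else 0 :=
    calc coeff (n + 1) (unscale h + X * epsSolution.G)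
        = coeff (n + 1) (1 + X * epsSolution.sol true 0 []) :=
          congrArg (coeff (n + 1)) epsSolution.one_add_mul_sol_nil.symm
      _ = coeff n (epsSolution.sol true 0 []) := by
          rw [map_add, coeff_succ_X_mul, coeff_one, if_neg n.succ_ne_zero, zero_add]
      _ = _ := by rw [epsSolution.coeff_sol, sum_pow_leftPts]
  rw [← epsCoeff_unscale, ← epsCoeff_X_mul_epsSolution_G, ← map_add, coeff_epsCoeff, hgen,
    Polynomial.finsetSum_coeff, binomialMoment]
  congr 1
  refine Finset.sum_congr rfl fun σ _ => ?_
  split_ifs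
  · rw [Polynomial.coeff_one_add_X_pow]
  · rw [Polynomial.coeff_zero]

lemma binomialMoment_zero (n : ℕ) : binomialMoment 0 n = dCount n := by
  classical
  rw [binomialMoment, dCount, Nat.card_eq_fintype_card, Fintype.card_subtype]
  simp only [Nat.choose_zero_right, Nat.cast_one, Finset.sum_boole]

open scoped Classical in
lemma sum_leftPts (n : ℕ) :
    (∑ σ : Equiv.Perm (Fin n), if AvoidsD σ then (leftPts σ : ℝ) else 0) = binomialMoment 1 n := by
  simp only [binomialMoment, Nat.choose_one_right]

open scoped Classical in
lemma sum_leftPts_sq (n : ℕ) :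
    (∑ σ : Equiv.Perm (Fin n), if AvoidsD σ then (leftPts σ : ℝ) ^ 2 else 0) =
      2 * binomialMoment 2 n + binomialMoment 1 n := by
  rw [binomialMoment, ← sum_leftPts, Finset.mul_sum, ← Finset.sum_add_distrib]
  refine Finset.sum_congr rfl fun σ _ => ?_
  split_ifs
  · rw [Nat.cast_choose_two]; ring
  · simp

lemma tendsto_binomialMoment_div_dCount {k : ℕ} {l s a : ℝ} (hl : l ≠ 0)
    (hq : HasSqrtSingularity q 2 l) (hk : HasSqrtSingularity (taylorCoeff (k + 1)) s (a * l)) :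
    Tendsto (fun n => binomialMoment (k + 1) n / dCount n) atTop (𝓝 (a / (120 / 121))) := by
  have hlim := hk.tendsto.div (hasSqrtSingularity_h_add_taylorCoeff_zero hq).tendsto
    (by positivity)
  rw [mul_div_mul_right _ _ hl] at hlim
  refine hlim.congr' ?_
  filter_upwards [eventually_gt_atTop 0] with n hn
  have hpos := threeHalvesPow_pos hn
  obtain ⟨n, rfl⟩ := Nat.exists_eq_succ_of_ne_zero hn.ne'
  have hnum := binomialMoment_succ_div (k + 1) n
  have hden := binomialMoment_succ_div 0 n
  rw [if_neg k.succ_ne_zero, zero_add] at hnum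
  rw [if_pos rfl, binomialMoment_zero] at hden
  rw [Pi.div_apply, mul_div_mul_left _ _ hpos.ne', ← hnum, ← hden,
    div_div_div_cancel_right₀ (by positivity)]

end Moments

open scoped Classical in
theorem leftPts_mean_variance :
    Tendsto (fun n : ℕ =>
        (∑ σ : Equiv.Perm (Fin n), if AvoidsD σ then (leftPts σ : ℝ) else 0)
          / (dCount n : ℝ))
      atTop (nhds (175 / 132)) ∧
    Tendsto (fun n : ℕ =>
        (∑ σ : Equiv.Perm (Fin n), if AvoidsD σ then (leftPts σ : ℝ) ^ 2 else 0)
            / (dCount n : ℝ)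
          - ((∑ σ : Equiv.Perm (Fin n), if AvoidsD σ then (leftPts σ : ℝ) else 0)
            / (dCount n : ℝ)) ^ 2)
      atTop (nhds (74795 / 17424)) := by
  obtain ⟨l, hl, hq⟩ := Scaled.exists_hasSqrtSingularity_q
  have hmean := tendsto_binomialMoment_div_dCount hl hq
    (Scaled.hasSqrtSingularity_taylorCoeff_one hq)
  have hchoose := tendsto_binomialMoment_div_dCount hl hq
    (Scaled.hasSqrtSingularity_taylorCoeff_two hq)
  simp only [sum_leftPts, sum_leftPts_sq]
  rw [show (1750 / 1331 / (120 / 121) : ℝ) = 175 / 132 by norm_num] at hmean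
  refine ⟨hmean, ?_⟩
  have hvar := ((hchoose.const_mul 2).add hmean).sub (hmean.pow 2)
  rw [show (2 * (34300 / 14641 / (120 / 121)) + 175 / 132 - (175 / 132) ^ 2 : ℝ) =
    74795 / 17424 by norm_num] at hvar
  exact hvar.congr fun n => by rw [add_div, mul_div_assoc]
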